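/- (Discrete restriction estimate for the parabola.) Let n ≥ 5 be an integer. There exists a constant C = C(n) such that for every integer N ≥ 1 and every function f : ℤ → ℂ, ∫₀¹ | Σ_{x ∈ [−N,N] ∩ ℤ} f(x) e(α x²) |^n dα ≤ C N^{n−2} ( N^{−1} Σ_{x ∈ [−N,N] ∩ ℤ} |f(x)|² )^{n/2}, where e(t) = e^{2πit}. -/

import Mathlib

open scoped BigOperators ENNReal NNReal
open MeasureTheory Finset

noncomputable section

/-- `sphereCount n lam` is the number of lattice points `x ∈ ℤ^n` with
`x₁² + ⋯ + x_n² = lam`. -/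
def sphereCount (n lam : ℕ) : ℕ :=
  {x : Fin n → ℤ | ∑ i, (x i) ^ 2 = (lam : ℤ)}.ncard

/-- The multilinear spherical average
`A_lam[f₁,…,f_n](y) = (1/r_n(lam)) ∑_{|x|² = lam} f₁(y-x₁)⋯f_n(y-x_n)`. -/
def mulAvg (n lam : ℕ) (f : Fin n → ℤ → ℂ) (y : ℤ) : ℂ :=
  (sphereCount n lam : ℂ)⁻¹ *
    ∑ᶠ x ∈ {x : Fin n → ℤ | ∑ i, (x i) ^ 2 = (lam : ℤ)}, ∏ i, f i (y - x i)

/-- The maximal function `A_*[f₁,…,f_n](y) = sup_{lam ≥ 1} |A_lam[f₁,…,f_n](y)|`. -/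
def maxFn (n : ℕ) (f : Fin n → ℤ → ℂ) (y : ℤ) : ℝ≥0∞ :=
  ⨆ (lam : ℕ) (_ : 1 ≤ lam), (‖mulAvg n lam f y‖₊ : ℝ≥0∞)

/-- The `ℓ^p(ℤ)` norm of a complex-valued function, valued in `ℝ≥0∞`. -/
def lpNorm (p : ℝ) (g : ℤ → ℂ) : ℝ≥0∞ :=
  (∑' x : ℤ, (‖g x‖₊ : ℝ≥0∞) ^ p) ^ (1 / p)

/-- The `ℓ^q(ℤ)` norm of an `ℝ≥0∞`-valued function. -/
def lqNormE (q : ℝ) (g : ℤ → ℝ≥0∞) : ℝ≥0∞ :=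
  (∑' x : ℤ, g x ^ q) ^ (1 / q)

/-- The additive character `e(t) = exp(2 π i t)`. -/
def ee (t : ℝ) : ℂ := Complex.exp (2 * Real.pi * Complex.I * (t : ℂ))

lemma ee_add (s t : ℝ) : ee (s + t) = ee s * ee t := by
  unfold ee; rw [← Complex.exp_add]; push_cast; ring_nf

lemma ee_zero : ee 0 = 1 := by simp [ee]

lemma ee_norm (t : ℝ) : ‖ee t‖ = 1 := by
  have h : ee t = Complex.exp (((2 * Real.pi * t : ℝ) : ℂ) * Complex.I) := by
    unfold ee; push_cast; ring_nf
  rw [h, Complex.norm_exp_ofReal_mul_I]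

lemma ee_int (k : ℤ) : ee k = 1 := by
  unfold ee
  rw [Complex.exp_eq_one_iff]
  exact ⟨k, by push_cast; ring⟩

lemma ee_eq_one_iff (t : ℝ) : ee t = 1 ↔ ∃ k : ℤ, t = k := by
  constructor
  · intro h
    unfold ee at h
    rw [Complex.exp_eq_one_iff] at h
    obtain ⟨k, hk⟩ := h
    refine ⟨k, ?_⟩
    have h2 : (2 * Real.pi * Complex.I : ℂ) ≠ 0 := Complex.two_pi_I_ne_zero
    have : (2 * Real.pi * Complex.I : ℂ) * (t : ℂ) = (2 * Real.pi * Complex.I : ℂ) * (k : ℂ) := by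
      rw [hk]; ring
    have := mul_left_cancel₀ h2 this
    exact_mod_cast this
  · rintro ⟨k, rfl⟩; exact ee_int k

lemma ee_conj (t : ℝ) : (starRingEnd ℂ) (ee t) = ee (-t) := by
  unfold ee
  rw [← Complex.exp_conj]
  simp [map_ofNat]

lemma ee_nat_mul (n : ℕ) (t : ℝ) : ee (n * t) = ee t ^ n := by
  unfold ee
  rw [← Complex.exp_nat_mul]; push_cast; ring_nf

lemma ee_add_int (t : ℝ) (k : ℤ) : ee (t + k) = ee t := by
  rw [ee_add, ee_int, mul_one]

lemma ee_orth (M : ℕ) (hM : 0 < M) (k : ℤ) :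
    ∑ j ∈ range M, ee (k * j / M) = if (M : ℤ) ∣ k then (M : ℂ) else 0 := by
  have hM' : (M : ℝ) ≠ 0 := by positivity
  have h1 : ∀ j ∈ range M, ee (k * j / M) = ee (k / M : ℝ) ^ j := by
    intro j _
    rw [← ee_nat_mul]; congr 1; ring
  rw [sum_congr rfl h1]
  split_ifs with h
  · obtain ⟨c, rfl⟩ := h
    have : ee (((M * c : ℤ) : ℝ) / M) = 1 := by
      rw [ee_eq_one_iff]; exact ⟨c, by push_cast; field_simp⟩
    rw [this]; simp
  · have hne : ee (k / M : ℝ) ≠ 1 := by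
      intro hh
      rw [ee_eq_one_iff] at hh
      obtain ⟨c, hc⟩ := hh
      apply h
      refine ⟨c, ?_⟩
      have : (k : ℝ) = M * c := by rw [← hc]; field_simp
      exact_mod_cast this
    rw [geom_sum_eq hne, ← ee_nat_mul]
    have : ee (M * (k / M : ℝ)) = 1 := by
      rw [ee_eq_one_iff]; exact ⟨k, by field_simp⟩
    rw [this]; simp

lemma norm_sq_sum_eq {ι : Type*} (S : Finset ι) (z : ι → ℂ) :
    ((‖∑ m ∈ S, z m‖ ^ 2 : ℝ) : ℂ) = ∑ a ∈ S, ∑ b ∈ S, z a * (starRingEnd ℂ) (z b) := by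
  rw [← Complex.normSq_eq_norm_sq, ← Complex.mul_conj, map_sum, Finset.sum_mul_sum]

lemma bessel1 {ι : Type*} (M : ℕ) (hM : 0 < M) (S : Finset ι) (v : ι → ℤ)
    (hv : ∀ a ∈ S, ∀ b ∈ S, (M : ℤ) ∣ v a - v b → a = b) (c : ι → ℂ) :
    ∑ j ∈ range M, ‖∑ m ∈ S, c m * ee (v m * j / M)‖ ^ 2 = M * ∑ m ∈ S, ‖c m‖ ^ 2 := by
  classical
  have : ((∑ j ∈ range M, ‖∑ m ∈ S, c m * ee (v m * j / M)‖ ^ 2 : ℝ) : ℂ)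
      = ((M * ∑ m ∈ S, ‖c m‖ ^ 2 : ℝ) : ℂ) := by
    rw [Complex.ofReal_sum]
    simp_rw [norm_sq_sum_eq]
    rw [sum_comm]
    push_cast
    rw [mul_sum]
    apply sum_congr rfl
    intro a ha
    rw [sum_comm]
    have h1 : ∀ b ∈ S, ∑ j ∈ range M, c a * ee (v a * j / M) *
        (starRingEnd ℂ) (c b * ee (v b * j / M)) = 
        if b = a then c a * (starRingEnd ℂ) (c a) * M else 0 := by
      intro b hb
      have h2 : ∀ j ∈ range M, c a * ee (v a * j / M) *
        (starRingEnd ℂ) (c b * ee (v b * j / M)) =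
          c a * (starRingEnd ℂ) (c b) * ee (((v a - v b : ℤ) : ℝ) * j / M) := by
        intro j _
        rw [map_mul, ee_conj]
        have : (((v a - v b : ℤ) : ℝ) * j / M) = v a * j / M + -(v b * j / M) := by
          push_cast; ring
        rw [this, ee_add]; ring
      rw [sum_congr rfl h2, ← mul_sum, ee_orth M hM]
      by_cases hab : b = a
      · subst hab; simp
      · have : ¬ (M : ℤ) ∣ v a - v b := fun h => hab (hv a ha b hb h).symm
        simp [this, hab]
    rw [sum_congr rfl h1, sum_ite_eq' S a]
    simp only [ha, if_true]
    rw [Complex.mul_conj, Complex.normSq_eq_norm_sq]; push_cast; ring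
  exact_mod_cast this

lemma bessel2 {ι : Type*} (M : ℕ) (hM : 0 < M) (S : Finset ι) (v : ι → ℤ)
    (hv : ∀ a ∈ S, ∀ b ∈ S, (M : ℤ) ∣ v a - v b → a = b) (A : Finset ℕ) (hA : A ⊆ range M) :
    ∑ m ∈ S, ‖∑ j ∈ A, ee (v m * j / M)‖ ^ 2 ≤ M * A.card := by
  classical
  have hM' : (M : ℝ) ≠ 0 := by positivity
  have hMz : (M : ℤ) ≠ 0 := by positivity
  have h0 := bessel1 M hM A (fun j => (j : ℤ)) (by
    intro a ha b hb h
    have h1 := mem_range.1 (hA ha)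
    have h2 := mem_range.1 (hA hb)
    have := Int.eq_zero_of_abs_lt_dvd h (by rw [abs_lt]; constructor <;> omega)
    omega) (fun _ => 1)
  simp only [one_mul, norm_one, one_pow, sum_const, nsmul_eq_mul, mul_one] at h0
  rw [← h0]
  set g : ℕ → ℝ := fun k => ‖∑ j ∈ A, ee ((j : ℤ) * k / M)‖ ^ 2 with hg
  have h1 : ∀ m ∈ S, ‖∑ j ∈ A, ee (v m * j / M)‖ ^ 2 = g ((v m % M).toNat) := by
    intro m _
    simp only [hg]
    congr 2
    apply sum_congr rfl
    intro j _
    have h3 : (((v m % M).toNat : ℕ) : ℝ) = ((v m % M : ℤ) : ℝ) := by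
      have : (((v m % M).toNat : ℕ) : ℤ) = v m % M := Int.toNat_of_nonneg (Int.emod_nonneg _ hMz)
      exact_mod_cast congrArg (fun z : ℤ => (z : ℝ)) this
    rw [h3]
    have h4 : (v m : ℝ) = ((v m % M : ℤ) : ℝ) + M * ((v m / M : ℤ) : ℝ) := by
      have := Int.emod_add_mul_ediv (v m) M
      exact_mod_cast this.symm
    rw [h4]
    have h5 : ((((v m % M : ℤ) : ℝ) + M * ((v m / M : ℤ) : ℝ)) * j / M)
      = (((j : ℤ) : ℝ) * ((v m % M : ℤ) : ℝ) / M) + ((v m / M * j : ℤ) : ℝ) := by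
      push_cast; field_simp
    rw [h5, ee_add_int]
  rw [sum_congr rfl h1]
  have hinj : Set.InjOn (fun m => (v m % M).toNat) (S : Set ι) := by
    intro a ha b hb hab
    apply hv a ha b hb
    have ha' := Int.emod_nonneg (v a) hMz
    have hb' := Int.emod_nonneg (v b) hMz
    have : v a % M = v b % M := by
      simp only at hab; omega
    exact Int.ModEq.dvd (Int.ModEq.symm this)
  rw [← sum_image (f := g) hinj]
  apply sum_le_sum_of_subset_of_nonneg
  · intro k hk
    obtain ⟨m, _, rfl⟩ := mem_image.1 hk
    have := Int.emod_lt_of_pos (v m) (show (0 : ℤ) < M by exact_mod_cast hM)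
    have := Int.emod_nonneg (v m) hMz
    simp only [mem_range]; omega
  · intro k _ _; positivity

lemma sum_Icc_int {β : Type*} [AddCommMonoid β] (a b : ℤ) (f : ℤ → β) :
    ∑ y ∈ Finset.Icc a b, f y = ∑ j ∈ range (b + 1 - a).toNat, f (a + j) := by
  symm
  apply sum_nbij' (fun j : ℕ => a + (j : ℤ)) (fun y : ℤ => (y - a).toNat)
  · intro j hj; simp only [mem_range, Finset.mem_Icc] at *; omega
  · intro y hy; simp only [mem_range, Finset.mem_Icc] at *; omega
  · intro j hj; simp
  · intro y hy; simp only [Finset.mem_Icc] at hy; omega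
  · intro j hj; rfl

lemma ee_sub_one_norm (t δ : ℝ) (h : ∀ k : ℤ, δ ≤ |t - k|) : 4 * δ ≤ ‖ee t - 1‖ := by
  have h1 := h (round t)
  have h2 : ee t = ee (t - round t) := by
    have := ee_add_int (t - round t) (round t)
    rw [← this]; congr 1; ring
  have h3 := abs_sub_round t
  set s := t - round t
  have h4 : ee s = Complex.exp (Complex.I * ((2 * Real.pi * s : ℝ) : ℂ)) := by
    unfold ee; push_cast; ring_nf
  rw [h2, h4, Complex.norm_exp_I_mul_ofReal_sub_one]
  have hpi := Real.pi_pos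
  have h5 : |Real.pi * s| ≤ Real.pi / 2 := by
    rw [abs_mul, abs_of_pos hpi]; nlinarith
  have h6 := Real.mul_abs_le_abs_sin h5
  rw [abs_mul, abs_of_pos hpi] at h6
  have h7 : 2 / Real.pi * (Real.pi * |s|) = 2 * |s| := by field_simp
  rw [h7] at h6
  have h8 : 2 * Real.pi * s / 2 = Real.pi * s := by ring
  rw [h8, Real.norm_eq_abs, abs_mul, abs_two]
  linarith

lemma geom_bound (t δ : ℝ) (hδ : 0 < δ) (h : ∀ k : ℤ, δ ≤ |t - k|) (a b : ℤ) :
    ‖∑ y ∈ Finset.Icc a b, ee (t * y)‖ ≤ 1 / (2 * δ) := by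
  have h1 := ee_sub_one_norm t δ h
  rw [sum_Icc_int]
  have h2 : ∀ j ∈ range (b + 1 - a).toNat, ee (t * ((a + j : ℤ) : ℝ)) = ee (t * a) * ee t ^ j := by
    intro j _
    rw [← ee_nat_mul, ← ee_add]; congr 1; push_cast; ring
  rw [sum_congr rfl h2, ← mul_sum, norm_mul, ee_norm, one_mul]
  have hne : ee t ≠ 1 := by
    intro hh; rw [hh] at h1; simp at h1; linarith
  rw [geom_sum_eq hne, norm_div]
  have h3 : ‖ee t ^ (b + 1 - a).toNat - 1‖ ≤ 2 := by
    calc _ ≤ ‖ee t ^ (b + 1 - a).toNat‖ + ‖(1 : ℂ)‖ := norm_sub_le _ _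
      _ = 2 := by rw [norm_pow, ee_norm]; norm_num
  rw [div_le_div_iff₀ (by linarith) (by linarith)]
  nlinarith

/-- The complete quadratic Weyl sum. -/
def KK (N : ℕ) (θ : ℝ) : ℂ := ∑ x ∈ Finset.Icc (-(N : ℤ)) (N : ℤ), ee (θ * (x : ℝ) ^ 2)

lemma KK_diff (N : ℕ) (θ : ℝ) :
    ‖KK N θ‖ ^ 2 ≤ ∑ h ∈ Finset.Icc (-(2 * N : ℤ)) (2 * N : ℤ),
      ‖∑ y ∈ Finset.Icc (max (-(N : ℤ)) (-(N : ℤ) - h)) (min (N : ℤ) (N - h)),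
        ee ((h * (2 * θ)) * y)‖ := by
  set I := Finset.Icc (-(N : ℤ)) (N : ℤ) with hI
  have h1 : ((‖KK N θ‖ ^ 2 : ℝ) : ℂ) = ∑ h ∈ Finset.Icc (-(2 * N : ℤ)) (2 * N : ℤ),
      ∑ y ∈ Finset.Icc (max (-(N : ℤ)) (-(N : ℤ) - h)) (min (N : ℤ) (N - h)),
        ee (θ * (h : ℝ) ^ 2) * ee ((h * (2 * θ)) * y) := by
    unfold KK
    rw [norm_sq_sum_eq, ← sum_product']
    rw [← sum_fiberwise_of_maps_to (s := I ×ˢ I) (t := Finset.Icc (-(2 * N : ℤ)) (2 * N : ℤ))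
      (g := fun p => p.1 - p.2)]
    · apply sum_congr rfl
      intro h _
      apply sum_nbij' (fun p => p.2) (fun y => (y + h, y))
      · rintro ⟨x, y⟩ hp
        simp only [hI, mem_filter, mem_product, Finset.mem_Icc] at *
        omega
      · intro y hp
        simp only [hI, mem_filter, mem_product, Finset.mem_Icc] at *
        omega
      · rintro ⟨x, y⟩ hp
        simp only [mem_filter] at hp
        ext <;> simp; omega
      · intro y _; rfl
      · rintro ⟨x, y⟩ hp
        simp only [mem_filter] at hp
        have : x = y + h := by omega
        subst this
        simp only
        rw [ee_conj, ← ee_add, ← ee_add]; congr 1; push_cast; ring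
    · rintro ⟨x, y⟩ hp
      simp only [hI, mem_product, Finset.mem_Icc] at *
      omega
  have h2 : ‖KK N θ‖ ^ 2 = ‖((‖KK N θ‖ ^ 2 : ℝ) : ℂ)‖ := by
    rw [Complex.norm_real, Real.norm_of_nonneg (by positivity)]
  rw [h2, h1]
  refine (norm_sum_le _ _).trans (sum_le_sum fun h _ => ?_)
  rw [← mul_sum, norm_mul, ee_norm, one_mul]

lemma sum_rpow_le (J : ℕ) :
    ∑ j ∈ Finset.Icc 1 J, (j : ℝ) ^ (-(7 / 8) : ℝ) ≤ 8 * (J : ℝ) ^ (1 / 8 : ℝ) := by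
  induction J with
  | zero => simp
  | succ J ih =>
    rw [sum_Icc_succ_top (by omega)]
    have hJ : (0 : ℝ) ≤ J := by positivity
    set a : ℝ := ((J + 1 : ℕ) : ℝ) ^ (1 / 8 : ℝ) with ha
    set b : ℝ := (J : ℝ) ^ (1 / 8 : ℝ) with hb
    have ha0 : 0 < a := by positivity
    have hb0 : 0 ≤ b := by positivity
    have hab : b ≤ a := by
      apply Real.rpow_le_rpow hJ (by push_cast; linarith) (by norm_num)
    have ha8 : a ^ 8 = J + 1 := by
      rw [ha, ← Real.rpow_natCast, ← Real.rpow_mul (by positivity)]; norm_num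
    have hb8 : b ^ 8 = J := by
      rw [hb, ← Real.rpow_natCast, ← Real.rpow_mul (by positivity)]; norm_num
    have h7 : ((J + 1 : ℕ) : ℝ) ^ (-(7 / 8) : ℝ) = (a ^ 7)⁻¹ := by
      rw [ha, ← Real.rpow_natCast, ← Real.rpow_mul (by positivity),
        ← Real.rpow_neg (by positivity)]; norm_num
    rw [h7]
    have hfac : (a - b) * (a^7 + a^6*b + a^5*b^2 + a^4*b^3 + a^3*b^4+a^2*b^5+a*b^6+b^7) = 1 := by
      have : (a - b) * (a^7 + a^6*b + a^5*b^2 + a^4*b^3 + a^3*b^4+a^2*b^5+a*b^6+b^7)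
        = a ^ 8 - b ^ 8 := by ring
      rw [this, ha8, hb8]; ring
    have hle : a^7 + a^6*b + a^5*b^2 + a^4*b^3 + a^3*b^4+a^2*b^5+a*b^6+b^7 ≤ 8 * a ^ 7 := by
      have e : ∀ i k : ℕ, i + k = 7 → a ^ i * b ^ k ≤ a ^ 7 := by
        intro i k hik
        rw [← hik, pow_add]
        gcongr
      have := e 6 1 rfl; have := e 5 2 rfl; have := e 4 3 rfl; have := e 3 4 rfl
      have := e 2 5 rfl; have := e 1 6 rfl; have := e 0 7 rfl
      simp only [pow_one, pow_zero, one_mul] at *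
      linarith
    have h9 : 1 ≤ (a - b) * (8 * a ^ 7) := by
      rw [← hfac]; gcongr
    have h10 : (a ^ 7)⁻¹ ≤ 8 * (a - b) := by
      rw [inv_le_iff_one_le_mul₀ (by positivity)]; linarith
    linarith

lemma sum_inv_le (J : ℕ) :
    ∑ j ∈ Finset.Icc 1 J, (1 / (j : ℝ)) ≤ 8 * (J : ℝ) ^ (1 / 8 : ℝ) := by
  refine le_trans (sum_le_sum fun j hj => ?_) (sum_rpow_le J)
  have : (1 : ℝ) ≤ j := by exact_mod_cast (Finset.mem_Icc.1 hj).1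
  rw [one_div, ← Real.rpow_neg_one]
  exact Real.rpow_le_rpow_of_exponent_le this (by norm_num)

/-- Sum over frequencies not divisible by `q`. -/
lemma sum_nondvd (N q : ℕ) (hN : 1 ≤ N) (hq : 1 ≤ q) (hqN : q ≤ 8 * N) (a : ℤ)
    (hco : IsCoprime a (q : ℤ)) :
    ∑ h ∈ (Finset.Icc (-(2 * N : ℤ)) (2 * N : ℤ)).filter (fun h => ¬ (q : ℤ) ∣ h),
      ((q : ℝ) / ((h * a % q).toNat : ℝ) + q / (q - ((h * a % q).toNat : ℝ)))
      ≤ 640 * (N : ℝ) ^ (9 / 8 : ℝ) := by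
  classical
  have hq0 : (0 : ℤ) < q := by exact_mod_cast hq
  have hqr : (0 : ℝ) < q := by exact_mod_cast hq
  have hNr : (1 : ℝ) ≤ N := by exact_mod_cast hN
  have hqNr : (q : ℝ) ≤ 8 * N := by exact_mod_cast hqN
  set G : ℕ → ℝ := fun r => (q : ℝ) / (r : ℝ) + q / (q - (r : ℝ)) with hG
  set S := (Finset.Icc (-(2 * N : ℤ)) (2 * N : ℤ)).filter (fun h => ¬ (q : ℤ) ∣ h) with hS
  have hmaps : ∀ h ∈ S, (h * a % q).toNat ∈ Finset.Icc 1 (q - 1) := by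
    intro h hh
    have h1 := Int.emod_nonneg (h * a) hq0.ne'
    have h2 := Int.emod_lt_of_pos (h * a) hq0
    have h3 : h * a % q ≠ 0 := by
      intro h0
      have := Int.dvd_of_emod_eq_zero h0
      have := hco.symm.dvd_of_dvd_mul_right this
      exact (mem_filter.1 hh).2 this
    rw [Finset.mem_Icc]; omega
  have hcard : ∀ r ∈ Finset.Icc 1 (q - 1),
      ((S.filter (fun h => (h * a % q).toNat = r)).card : ℝ) ≤ 4 * N / q + 2 := by
    intro r _
    have hinj : Set.InjOn (fun h : ℤ => h / q)
        (S.filter (fun h => (h * a % q).toNat = r) : Finset ℤ) := by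
      intro h hh h' hh' heq
      have e1 := (mem_filter.1 hh).2
      have e2 := (mem_filter.1 hh').2
      have h1 := Int.emod_nonneg (h * a) hq0.ne'
      have h2 := Int.emod_nonneg (h' * a) hq0.ne'
      have h3 : h * a % q = h' * a % q := by omega
      have h4 : (q : ℤ) ∣ (h' - h) * a := by
        have := Int.ModEq.dvd h3
        rwa [← sub_mul] at this
      have h5 : (q : ℤ) ∣ h' - h := hco.symm.dvd_of_dvd_mul_right h4
      have h6 : h % q = h' % q := (Int.modEq_iff_dvd.2 h5)
      have h7 := Int.emod_add_mul_ediv h q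
      have h8 := Int.emod_add_mul_ediv h' q
      simp only at heq
      rw [← h7, ← h8, h6, heq]
    have hsub : (S.filter (fun h => (h * a % q).toNat = r)).image (fun h : ℤ => h / q) ⊆
        Finset.Icc (-(2 * N : ℤ) / q) ((2 * N : ℤ) / q) := by
      intro y hy
      obtain ⟨h, hh, rfl⟩ := mem_image.1 hy
      have := Finset.mem_Icc.1 (mem_filter.1 (mem_filter.1 hh).1).1
      rw [Finset.mem_Icc]
      exact ⟨Int.ediv_le_ediv hq0 this.1, Int.ediv_le_ediv hq0 this.2⟩
    have h1 := card_le_card hsub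
    rw [card_image_of_injOn hinj, Int.card_Icc] at h1
    have h2 : (((S.filter (fun h => (h * a % q).toNat = r)).card : ℕ) : ℤ) ≤
        (2 * N : ℤ) / q + 1 - (-(2 * N : ℤ) / q) := by
      have e : -(2 * N : ℤ) / q ≤ (2 * N : ℤ) / q := Int.ediv_le_ediv hq0 (by omega)
      omega
    have h3 : (((S.filter (fun h => (h * a % q).toNat = r)).card : ℕ) : ℝ) ≤
        (((2 * N : ℤ) / q : ℤ) : ℝ) + 1 - ((-(2 * N : ℤ) / q : ℤ) : ℝ) := by exact_mod_cast h2
    have h4 : (((2 * N : ℤ) / q : ℤ) : ℝ) ≤ 2 * N / q := by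
      rw [le_div_iff₀ hqr]
      have := Int.ediv_mul_le (2 * N : ℤ) hq0.ne'
      exact_mod_cast this
    have h5 : -(2 * N : ℝ) / q - 1 ≤ ((-(2 * N : ℤ) / q : ℤ) : ℝ) := by
      rw [sub_le_iff_le_add, div_le_iff₀ hqr]
      have := Int.lt_ediv_add_one_mul_self (-(2 * N : ℤ)) hq0
      exact_mod_cast this.le
    have : (4 * N / q : ℝ) = 2 * N / q - (-(2 * N : ℝ) / q) := by ring
    linarith
  change ∑ h ∈ S, G ((h * a % q).toNat) ≤ _
  rw [← sum_fiberwise_of_maps_to hmaps]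
  have hGnn : ∀ r ∈ Finset.Icc 1 (q - 1), 0 ≤ G r := by
    intro r hr
    have := Finset.mem_Icc.1 hr
    have h2 : (r : ℝ) ≤ q := by exact_mod_cast (by omega : r ≤ q)
    simp only [hG]
    have : (0 : ℝ) ≤ q - r := by linarith
    positivity
  have h1 : ∑ r ∈ Finset.Icc 1 (q - 1), ∑ h ∈ S.filter (fun h => (h * a % q).toNat = r),
      G ((h * a % q).toNat) ≤ ∑ r ∈ Finset.Icc 1 (q - 1), (4 * N / q + 2 : ℝ) * G r := by
    apply sum_le_sum
    intro r hr
    rw [sum_congr rfl (g := fun _ => G r) (fun h hh => by rw [(mem_filter.1 hh).2]), sum_const,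
      nsmul_eq_mul]
    exact mul_le_mul_of_nonneg_right (hcard r hr) (hGnn r hr)
  refine h1.trans ?_
  rw [← mul_sum]
  have h2 : ∑ r ∈ Finset.Icc 1 (q - 1), G r = 2 * q * ∑ r ∈ Finset.Icc 1 (q - 1), (1 / (r : ℝ)) := by
    simp only [hG, sum_add_distrib]
    have e : ∑ r ∈ Finset.Icc 1 (q - 1), ((q : ℝ) / (q - (r : ℝ)))
        = ∑ r ∈ Finset.Icc 1 (q - 1), ((q : ℝ) / (r : ℝ)) := by
      apply sum_nbij' (fun r => q - r) (fun r => q - r)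
      · intro r hr; simp only [Finset.mem_Icc] at *; omega
      · intro r hr; simp only [Finset.mem_Icc] at *; omega
      · intro r hr; simp only [Finset.mem_Icc] at *; omega
      · intro r hr; simp only [Finset.mem_Icc] at *; omega
      · intro r hr
        simp only [Finset.mem_Icc] at hr
        rw [Nat.cast_sub (by omega)]
    rw [e, mul_sum, ← sum_add_distrib]
    apply sum_congr rfl; intro r _; ring
  rw [h2]
  have h3 := sum_inv_le (q - 1)
  have h4 : ((q - 1 : ℕ) : ℝ) ^ (1 / 8 : ℝ) ≤ (8 * N : ℝ) ^ (1 / 8 : ℝ) := by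
    apply Real.rpow_le_rpow (by positivity) _ (by norm_num)
    refine le_trans ?_ hqNr
    exact_mod_cast Nat.sub_le q 1
  have h5 : (8 * N : ℝ) ^ (1 / 8 : ℝ) ≤ 2 * (N : ℝ) ^ (1 / 8 : ℝ) := by
    rw [Real.mul_rpow (by norm_num) (by positivity)]
    gcongr
    calc (8 : ℝ) ^ (1 / 8 : ℝ) ≤ (2 ^ (8 : ℝ)) ^ (1 / 8 : ℝ) := by
          apply Real.rpow_le_rpow (by norm_num) (by norm_num) (by norm_num)
      _ = 2 := by rw [← Real.rpow_mul (by norm_num)]; norm_num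
  have h6 : ∑ r ∈ Finset.Icc 1 (q - 1), (1 / (r : ℝ)) ≤ 16 * (N : ℝ) ^ (1 / 8 : ℝ) := by linarith
  have h7 : (N : ℝ) ^ (9 / 8 : ℝ) = N * (N : ℝ) ^ (1 / 8 : ℝ) := by
    rw [show (9 / 8 : ℝ) = 1 + 1 / 8 by norm_num, Real.rpow_add (by linarith), Real.rpow_one]
  rw [h7]
  have h8 : (0 : ℝ) < (N : ℝ) ^ (1 / 8 : ℝ) := by positivity
  calc (4 * N / q + 2 : ℝ) * (2 * q * ∑ r ∈ Finset.Icc 1 (q - 1), (1 / (r : ℝ)))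
      = (8 * N + 4 * q) * ∑ r ∈ Finset.Icc 1 (q - 1), (1 / (r : ℝ)) := by field_simp; ring
    _ ≤ (8 * N + 4 * q) * (16 * (N : ℝ) ^ (1 / 8 : ℝ)) := by gcongr
    _ ≤ (8 * N + 4 * (8 * N)) * (16 * (N : ℝ) ^ (1 / 8 : ℝ)) := by gcongr
    _ = 640 * (N * (N : ℝ) ^ (1 / 8 : ℝ)) := by ring

/-- Sum over nonzero multiples of `q`. -/
lemma sum_dvd (N q : ℕ) (hq : 1 ≤ q) (T : ℕ → ℝ) (hT : ∀ j, 0 ≤ T j) :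
    ∑ h ∈ (Finset.Icc (-(2 * N : ℤ)) (2 * N : ℤ)).filter (fun h => (q : ℤ) ∣ h ∧ h ≠ 0),
      T (h.natAbs / q) ≤ 2 * ∑ j ∈ Finset.Icc 1 (2 * N / q), T j := by
  classical
  set S := (Finset.Icc (-(2 * N : ℤ)) (2 * N : ℤ)).filter (fun h => (q : ℤ) ∣ h ∧ h ≠ 0) with hS
  have hmaps : ∀ h ∈ S, h.natAbs / q ∈ Finset.Icc 1 (2 * N / q) := by
    intro h hh
    obtain ⟨h1, ⟨c, hc⟩, h3⟩ := mem_filter.1 hh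
    rw [Finset.mem_Icc] at h1 ⊢
    refine ⟨?_, Nat.div_le_div_right (by omega)⟩
    rw [Nat.le_div_iff_mul_le (by omega), one_mul]
    apply Nat.le_of_dvd (by omega)
    rw [← Int.natCast_dvd]; exact ⟨c, hc⟩
  rw [← sum_fiberwise_of_maps_to hmaps, mul_sum]
  apply sum_le_sum
  intro j hj
  rw [sum_congr rfl (g := fun _ => T j) (fun h hh => by rw [(mem_filter.1 hh).2]), sum_const,
    nsmul_eq_mul]
  apply mul_le_mul_of_nonneg_right _ (hT j)
  have : S.filter (fun h => h.natAbs / q = j) ⊆ {(q * j : ℤ), -(q * j : ℤ)} := by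
    intro h hh
    obtain ⟨hhS, h2⟩ := mem_filter.1 hh
    obtain ⟨_, hd, _⟩ := mem_filter.1 hhS
    have hd' : q ∣ h.natAbs := Int.natCast_dvd.1 hd
    have h4 := Nat.mul_div_cancel' hd'
    rw [h2] at h4
    simp only [mem_insert, mem_singleton]
    have : (h.natAbs : ℤ) = q * j := by exact_mod_cast h4.symm
    omega
  have h1 := (card_le_card this).trans (card_le_two)
  exact_mod_cast h1

lemma weyl_core (N : ℕ) (hN : 1 ≤ N) (θ : ℝ) :
    ∃ (a : ℤ) (q : ℕ), 1 ≤ q ∧ ∀ T : ℕ → ℝ, (∀ j, 0 ≤ T j) →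
      (∀ j : ℕ, 1 ≤ j → (∃ z : ℝ, z ≤ T j ∧ (z = 3 * N ∨ (2 * θ - a / q ≠ 0 ∧ 
        z = 1 / (2 * (q * j * |2 * θ - a / q|))))) ) →
      ‖KK N θ‖ ^ 2 ≤ 643 * (N : ℝ) ^ (9 / 8 : ℝ) + 2 * ∑ j ∈ Finset.Icc 1 (2 * N / q), T j := by
  obtain ⟨p, hp1, hp2⟩ := Real.exists_rat_abs_sub_le_and_den_le (2 * θ) (n := 8 * N) (by omega)
  set a := p.num with ha
  set q := p.den with hqdef
  have hq : 1 ≤ q := p.pos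
  have hqr : (0 : ℝ) < q := by exact_mod_cast hq
  have hNr : (1 : ℝ) ≤ N := by exact_mod_cast hN
  have hco : IsCoprime a (q : ℤ) := by
    have := p.reduced
    rw [Int.isCoprime_iff_gcd_eq_one]
    simpa [Nat.Coprime, Int.gcd] using this
  have hpr : (p : ℝ) = a / q := by rw [Rat.cast_def]
  rw [hpr] at hp1
  refine ⟨a, q, hq, fun T hT hTj => ?_⟩
  set β := 2 * θ - a / q with hβ
  have hβ1 : |β| ≤ 1 / (8 * N * q) := by
    refine hp1.trans ?_
    push_cast
    gcongr
    linarith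
  refine (KK_diff N θ).trans ?_
  set I := Finset.Icc (-(2 * N : ℤ)) (2 * N : ℤ) with hI
  set g : ℤ → ℝ := fun h => ‖∑ y ∈ Finset.Icc (max (-(N : ℤ)) (-(N : ℤ) - h)) (min (N : ℤ) (N - h)),
        ee ((h * (2 * θ)) * y)‖ with hg
  have hgtriv : ∀ h, g h ≤ 3 * N := by
    intro h
    simp only [hg]
    refine (norm_sum_le _ _).trans ?_
    simp only [ee_norm, sum_const, nsmul_eq_mul, mul_one, Int.card_Icc]
    have : (min (N : ℤ) (N - h) + 1 - max (-(N : ℤ)) (-(N : ℤ) - h)).toNat ≤ 3 * N := by omega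
    exact_mod_cast this
  have hhβ : ∀ h ∈ I, |h * β| ≤ 1 / (4 * q) := by
    intro h hh
    have h1 := Finset.mem_Icc.1 hh
    have h2 : |(h : ℝ)| ≤ 2 * N := by
      rw [abs_le]; constructor
      · exact_mod_cast h1.1
      · exact_mod_cast h1.2
    rw [abs_mul]
    calc |(h : ℝ)| * |β| ≤ (2 * N) * (1 / (8 * N * q)) := by gcongr
      _ = 1 / (4 * q) := by field_simp; norm_num
  have hdec : ∀ h : ℤ, (h : ℝ) * (2 * θ) = h * a / q + h * β := by
    intro h; rw [hβ]; ring
  -- non multiples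
  have hnd : ∀ h ∈ I.filter (fun h => ¬ (q : ℤ) ∣ h),
      g h ≤ ((q : ℝ) / ((h * a % q).toNat : ℝ) + q / (q - ((h * a % q).toNat : ℝ))) := by
    intro h hh
    obtain ⟨hhI, hnq⟩ := mem_filter.1 hh
    have hq0 : (0 : ℤ) < q := by exact_mod_cast hq
    have h1 := Int.emod_nonneg (h * a) hq0.ne'
    have h2 := Int.emod_lt_of_pos (h * a) hq0
    have h3 : h * a % q ≠ 0 := by
      intro h0
      have := Int.dvd_of_emod_eq_zero h0
      have := hco.symm.dvd_of_dvd_mul_right this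
      exact hnq this
    have h4 := Int.emod_add_mul_ediv (h * a) q
    set r := h * a % q with hr
    set m := h * a / q with hm
    have hrN : ((r.toNat : ℕ) : ℝ) = (r : ℝ) := by
      have : ((r.toNat : ℕ) : ℤ) = r := Int.toNat_of_nonneg h1
      exact_mod_cast congrArg (fun z : ℤ => (z : ℝ)) this
    rw [hrN]
    have hr1 : (1 : ℝ) ≤ r := by exact_mod_cast (by omega : (1 : ℤ) ≤ r)
    have hr2 : (r : ℝ) + 1 ≤ q := by exact_mod_cast (by omega : r + 1 ≤ (q : ℤ))
    have hbound := hhβ h hhI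
    have hha : (h * a : ℝ) / q = r / q + m := by
      have : (h * a : ℝ) = r + q * m := by exact_mod_cast h4.symm
      rw [this]; field_simp
    set μ : ℝ := min (r : ℝ) (q - r) with hμ
    have hμ1 : 1 ≤ μ := le_min hr1 (by linarith)
    have key := geom_bound (h * (2 * θ)) (μ / (2 * q)) (by positivity) (by
      intro k
      rw [hdec, hha]
      have e1 : μ / q ≤ |(r : ℝ) / q + (m - k : ℤ)| := by
        rcases le_or_gt 0 (m - k) with hmk | hmk
        · have : (0 : ℝ) ≤ ((m - k : ℤ) : ℝ) := by exact_mod_cast hmk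
          refine le_trans ?_ (le_abs_self _)
          have : μ / q ≤ r / q := by gcongr; exact min_le_left _ _
          linarith
        · have : ((m - k : ℤ) : ℝ) ≤ -1 := by exact_mod_cast (by omega : m - k ≤ -1)
          refine le_trans ?_ (neg_le_abs _)
          have : μ / q ≤ (q - r) / q := by gcongr; exact min_le_right _ _
          have e : ((q : ℝ) - r) / q = 1 - r / q := by field_simp
          linarith
      have e2 : |(r : ℝ) / q + (m - k : ℤ)| ≤ |(r : ℝ) / q + m + h * β - k| + |h * β| := by
        have : (r : ℝ) / q + (m - k : ℤ) = ((r : ℝ) / q + m + h * β - k) - h * β := by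
          push_cast; ring
        rw [this]; exact abs_sub _ _
      have e3 : 1 / (4 * q) ≤ μ / (4 * (q : ℝ)) := by gcongr
      have e4 : μ / (2 * q) = μ / q - 2 * (μ / (4 * q)) := by field_simp; ring
      have e5 : 0 ≤ μ / (4 * (q : ℝ)) := by positivity
      linarith)
    refine (key _ _).trans ?_
    have e6 : 1 / (2 * (μ / (2 * q))) = q / μ := by field_simp
    rw [e6]
    rcases min_choice (r : ℝ) (q - r) with hc | hc
    · rw [hμ, hc]
      have : 0 ≤ (q : ℝ) / (q - r) := div_nonneg hqr.le (by linarith)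
      linarith
    · rw [hμ, hc]
      have : 0 ≤ (q : ℝ) / r := div_nonneg hqr.le (by linarith)
      linarith
  -- multiples
  have hd : ∀ h ∈ I.filter (fun h => (q : ℤ) ∣ h ∧ h ≠ 0), g h ≤ T (h.natAbs / q) := by
    intro h hh
    obtain ⟨hhI, ⟨c, hc⟩, h0⟩ := mem_filter.1 hh
    have hc0 : c ≠ 0 := by rintro rfl; simp at hc; exact h0 hc
    have hj : h.natAbs / q = c.natAbs := by
      rw [hc, Int.natAbs_mul, Int.natAbs_natCast, Nat.mul_div_cancel_left _ (by omega)]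
    rw [hj]
    obtain ⟨z, hz, hz2⟩ := hTj c.natAbs (by omega)
    refine le_trans ?_ hz
    rcases hz2 with rfl | ⟨hβ0, rfl⟩
    · exact hgtriv h
    · have hcr : (c : ℝ) ≠ 0 := by exact_mod_cast hc0
      have hhr : (h : ℝ) = q * c := by exact_mod_cast hc
      have hcabs : ((c.natAbs : ℕ) : ℝ) = |(c : ℝ)| := by
        rw [← Int.cast_abs, Int.abs_eq_natAbs]; simp
      have habs : |(h : ℝ) * β| = q * c.natAbs * |β| := by
        rw [abs_mul, hhr, abs_mul, hcabs, abs_of_pos hqr]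
      have key := geom_bound (h * (2 * θ)) |h * β| (by
        rw [abs_pos, hhr]; positivity) (by
        intro k
        have hb := hhβ h hhI
        have hb2 : 1 / (4 * (q : ℝ)) ≤ 1 / 4 := by
          have : (1 : ℝ) ≤ q := by exact_mod_cast hq
          gcongr; linarith
        have e : (h : ℝ) * (2 * θ) - k = h * β + ((c * a - k : ℤ) : ℝ) := by
          rw [hdec]; push_cast
          rw [show (h : ℝ) * a / q = c * a by rw [hhr]; field_simp]; ring
        rw [e]
        by_cases hz : c * a - k = 0
        · rw [hz]; simp
        · have h1 : (1 : ℝ) ≤ |((c * a - k : ℤ) : ℝ)| := by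
            rw [← Int.cast_abs]; exact_mod_cast Int.one_le_abs hz
          have h2 : |((c * a - k : ℤ) : ℝ)| ≤ |h * β + ((c * a - k : ℤ) : ℝ)| + |h * β| := by
            have : ((c * a - k : ℤ) : ℝ) = (h * β + ((c * a - k : ℤ) : ℝ)) - h * β := by ring
            calc _ = |(h * β + ((c * a - k : ℤ) : ℝ)) - h * β| := by rw [← this]
              _ ≤ _ := abs_sub _ _
          linarith)
      rw [← habs]
      exact key _ _
  have hsplit : ∑ h ∈ I, g h = g 0 + ∑ h ∈ I.filter (fun h => (q : ℤ) ∣ h ∧ h ≠ 0), g h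
      + ∑ h ∈ I.filter (fun h => ¬ (q : ℤ) ∣ h), g h := by
    rw [← sum_filter_add_sum_filter_not I (fun h => (q : ℤ) ∣ h)]
    congr 1
    have h0 : (0 : ℤ) ∈ I.filter (fun h => (q : ℤ) ∣ h) := by
      simp [hI]
    rw [← add_sum_erase _ _ h0]
    congr 1
    apply sum_congr _ (fun _ _ => rfl)
    ext h; simp only [mem_erase, mem_filter]; tauto
  rw [hsplit]
  have s1 := sum_le_sum hnd
  have s2 := sum_nondvd N q hN hq hp2 a hco
  have s3 := sum_le_sum hd
  have s4 := sum_dvd N q hq T hT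
  have s5 := hgtriv 0
  have s6 : (N : ℝ) ≤ (N : ℝ) ^ (9 / 8 : ℝ) := by
    conv_lhs => rw [← Real.rpow_one (N : ℝ)]
    exact Real.rpow_le_rpow_of_exponent_le hNr (by norm_num)
  linarith

lemma weyl (N : ℕ) (hN : 1 ≤ N) (θ : ℝ) :
    ∃ (a : ℤ) (q : ℕ), 1 ≤ q ∧
      ‖KK N θ‖ ^ 2 ≤ 643 * ((N : ℝ) ^ (9 / 8 : ℝ) + (N : ℝ) ^ 2 / q) ∧
      (2 * θ - a / q ≠ 0 → ‖KK N θ‖ ^ 2 ≤ 643 * ((N : ℝ) ^ (9 / 8 : ℝ) +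
        (N : ℝ) ^ 2 / q * ((N : ℝ) ^ 2 * |2 * θ - a / q|) ^ (-(7 / 8) : ℝ))) := by
  obtain ⟨a, q, hq, H⟩ := weyl_core N hN θ
  have hqr : (0 : ℝ) < q := by exact_mod_cast hq
  have hNr : (1 : ℝ) ≤ N := by exact_mod_cast hN
  have hJ : ((2 * N / q : ℕ) : ℝ) ≤ 2 * N / q := by
    refine Nat.cast_div_le.trans ?_
    push_cast; rfl
  refine ⟨a, q, hq, ?_, ?_⟩
  · have h1 := H (fun _ => 3 * N) (fun _ => by positivity) (fun j _ => ⟨3 * N, le_rfl, Or.inl rfl⟩)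
    simp only [sum_const, Nat.card_Icc, nsmul_eq_mul, Nat.add_sub_cancel] at h1
    have h2 : ((2 * N / q : ℕ) : ℝ) * (3 * N) ≤ 2 * N / q * (3 * N) := by gcongr
    have h3 : (2 * N / q * (3 * N) : ℝ) = 6 * ((N : ℝ) ^ 2 / q) := by ring
    have h4 : 0 ≤ (N : ℝ) ^ 2 / q := by positivity
    linarith
  · intro hβ0
    set β := 2 * θ - a / q with hβ
    have hb : 0 < |β| := abs_pos.2 hβ0
    set X : ℝ := (3 * N : ℝ) ^ (1 / 8 : ℝ) * (1 / (2 * (q * |β|))) ^ (7 / 8 : ℝ) with hX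
    have hX0 : 0 ≤ X := by positivity
    have h1 := H (fun j => X * (j : ℝ) ^ (-(7 / 8) : ℝ)) (fun _ => by positivity) (by
      intro j hj
      have hjr : (0 : ℝ) < j := by exact_mod_cast hj
      set y := 1 / (2 * (q * j * |β|)) with hy
      have hy0 : 0 < y := by positivity
      have e : X * (j : ℝ) ^ (-(7 / 8) : ℝ) = (3 * N : ℝ) ^ (1 / 8 : ℝ) * y ^ (7 / 8 : ℝ) := by
        rw [hX, mul_assoc, Real.rpow_neg hjr.le, ← Real.inv_rpow hjr.le,
          ← Real.mul_rpow (by positivity) (by positivity)]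
        congr 2
        rw [hy]; field_simp
      simp only [e]
      rcases le_total (3 * N : ℝ) y with h | h
      · refine ⟨3 * N, ?_, Or.inl rfl⟩
        calc (3 * N : ℝ) = (3 * N : ℝ) ^ (1 / 8 : ℝ) * (3 * N : ℝ) ^ (7 / 8 : ℝ) := by
              rw [← Real.rpow_add (by positivity)]; norm_num
          _ ≤ _ := by gcongr
      · refine ⟨y, ?_, Or.inr ⟨hβ0, rfl⟩⟩
        calc y = y ^ (1 / 8 : ℝ) * y ^ (7 / 8 : ℝ) := by
              rw [← Real.rpow_add (by positivity)]; norm_num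
          _ ≤ _ := by gcongr)
    rw [← mul_sum] at h1
    have h2 := sum_rpow_le (2 * N / q)
    have h3 : ((2 * N / q : ℕ) : ℝ) ^ (1 / 8 : ℝ) ≤ (2 * N / q : ℝ) ^ (1 / 8 : ℝ) :=
      Real.rpow_le_rpow (by positivity) hJ (by norm_num)
    have h4 : X * ∑ j ∈ Finset.Icc 1 (2 * N / q), (j : ℝ) ^ (-(7 / 8) : ℝ) ≤
        X * (8 * (2 * N / q : ℝ) ^ (1 / 8 : ℝ)) := by gcongr; linarith
    have h5 : X * (2 * N / q : ℝ) ^ (1 / 8 : ℝ) ≤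
        6 * ((N : ℝ) ^ 2 / q * ((N : ℝ) ^ 2 * |β|) ^ (-(7 / 8) : ℝ)) := by
      have e1 : (3 * N : ℝ) ^ (1 / 8 : ℝ) * (2 * N / q : ℝ) ^ (1 / 8 : ℝ)
          = (6 * (N ^ 2 / q) : ℝ) ^ (1 / 8 : ℝ) := by
        rw [← Real.mul_rpow (by positivity) (by positivity)]; congr 1; ring
      have e2 : (1 / (2 * (q * |β|))) ^ (7 / 8 : ℝ) ≤
          (6 * (N ^ 2 / q) : ℝ) ^ (7 / 8 : ℝ) * ((N : ℝ) ^ 2 * |β|) ^ (-(7 / 8) : ℝ) := by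
        rw [Real.rpow_neg (by positivity), ← Real.inv_rpow (by positivity),
          ← Real.mul_rpow (by positivity) (by positivity)]
        apply Real.rpow_le_rpow (by positivity) _ (by norm_num)
        have : (6 * (N ^ 2 / q) : ℝ) * ((N : ℝ) ^ 2 * |β|)⁻¹ = 6 * (1 / (q * |β|)) := by
          field_simp
        rw [this]
        have : 1 / (2 * (q * |β|)) = 1 / 2 * (1 / (q * |β|)) := by field_simp
        rw [this]
        have : 0 ≤ 1 / (q * |β|) := by positivity
        linarith
      calc X * (2 * N / q : ℝ) ^ (1 / 8 : ℝ)
          = (6 * (N ^ 2 / q) : ℝ) ^ (1 / 8 : ℝ) * (1 / (2 * (q * |β|))) ^ (7 / 8 : ℝ) := by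
            rw [← e1, hX]; ring
        _ ≤ (6 * (N ^ 2 / q) : ℝ) ^ (1 / 8 : ℝ) * ((6 * (N ^ 2 / q) : ℝ) ^ (7 / 8 : ℝ)
            * ((N : ℝ) ^ 2 * |β|) ^ (-(7 / 8) : ℝ)) := by gcongr
        _ = 6 * ((N : ℝ) ^ 2 / q * ((N : ℝ) ^ 2 * |β|) ^ (-(7 / 8) : ℝ)) := by
            rw [← mul_assoc, ← Real.rpow_add (by positivity)]; norm_num; ring
    have h6 : 0 ≤ (N : ℝ) ^ 2 / q * ((N : ℝ) ^ 2 * |β|) ^ (-(7 / 8) : ℝ) := by positivity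
    linarith

lemma divisor_bound (ε : ℝ) (hε : 0 < ε) :
    ∃ C : ℝ, 1 ≤ C ∧ ∀ m : ℕ, m ≠ 0 → (m.divisors.card : ℝ) ≤ C * (m : ℝ) ^ ε := by
  set P : ℕ := ⌈(2 : ℝ) ^ (1 / ε)⌉₊ with hP
  set A : ℝ := 1 + 2 / ε with hA
  have hA1 : 1 ≤ A := by
    have : 0 < 2 / ε := by positivity
    linarith
  refine ⟨A ^ P, one_le_pow₀ hA1, fun m hm => ?_⟩
  rw [Nat.card_divisors hm]
  push_cast
  have h1 : (m : ℝ) ^ ε = ∏ p ∈ m.primeFactors, ((p : ℝ) ^ (m.factorization p)) ^ ε := by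
    conv_lhs => rw [← Nat.prod_factorization_pow_eq_self hm]
    rw [Finsupp.prod, Nat.support_factorization]
    push_cast
    rw [Real.finsetProd_rpow _ _ (fun i _ => by positivity)]
  have h2 : ∏ p ∈ m.primeFactors, (if p < P then A else 1) ≤ A ^ P := by
    rw [prod_ite, prod_const_one, mul_one, prod_const]
    apply pow_le_pow_right₀ hA1
    have : m.primeFactors.filter (fun p => p < P) ⊆ range P := by
      intro p hp; exact mem_range.2 (mem_filter.1 hp).2
    simpa using card_le_card this
  calc ∏ p ∈ m.primeFactors, ((m.factorization p : ℝ) + 1)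
      ≤ ∏ p ∈ m.primeFactors, ((if p < P then A else 1) * ((p : ℝ) ^ (m.factorization p)) ^ ε) := by
        apply prod_le_prod
        · intro p _; positivity
        · intro p hp
          have hp2 : 2 ≤ p := (Nat.prime_of_mem_primeFactors hp).two_le
          have hp2r : (2 : ℝ) ≤ p := by exact_mod_cast hp2
          set a := m.factorization p
          have e : ((p : ℝ) ^ a) ^ ε = ((p : ℝ) ^ ε) ^ a := by
            rw [← Real.rpow_natCast, ← Real.rpow_natCast, ← Real.rpow_mul (by positivity),
              ← Real.rpow_mul (by positivity), mul_comm]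
          split_ifs with hlt
          · have h3 : (1 : ℝ) + a * ε / 2 ≤ ((p : ℝ) ^ a) ^ ε := by
              have h4 : ((2 : ℝ) ^ a) ^ ε ≤ ((p : ℝ) ^ a) ^ ε := by gcongr
              refine le_trans ?_ h4
              have h5 : ((2 : ℝ) ^ a) ^ ε = Real.exp (Real.log 2 * (a * ε)) := by
                rw [← Real.rpow_natCast, ← Real.rpow_mul (by positivity),
                  Real.rpow_def_of_pos (by norm_num)]
              rw [h5]
              have h6 := Real.add_one_le_exp (Real.log 2 * (a * ε))
              have h7 := Real.log_two_gt_d9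
              have h8 : 0 ≤ a * ε := by positivity
              nlinarith
            have h9 : A * (1 + a * ε / 2) = 1 + a + (2 / ε + a * ε / 2) := by
              rw [hA]; field_simp; ring
            have h10 : 0 ≤ 2 / ε + a * ε / 2 := by positivity
            nlinarith
          · rw [one_mul, e]
            have h3 : (2 : ℝ) ≤ (p : ℝ) ^ ε := by
              have h4 : (2 : ℝ) ^ (1 / ε) ≤ p := (Nat.le_ceil _).trans (by
                exact_mod_cast (not_lt.1 hlt))
              calc (2 : ℝ) = ((2 : ℝ) ^ (1 / ε)) ^ ε := by
                    rw [← Real.rpow_mul (by norm_num), one_div_mul_cancel hε.ne', Real.rpow_one]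
                _ ≤ _ := by gcongr
            calc (a : ℝ) + 1 ≤ 2 ^ a := by exact_mod_cast (Nat.lt_two_pow_self (n := a))
              _ ≤ _ := by gcongr
    _ = (∏ p ∈ m.primeFactors, (if p < P then A else 1)) * (m : ℝ) ^ ε := by
        rw [prod_mul_distrib, ← h1]
    _ ≤ A ^ P * (m : ℝ) ^ ε := by gcongr

/-- `σ_{-s}(k)`. -/
def sig (s : ℝ) (k : ℕ) : ℝ := ∑ q ∈ k.divisors, (q : ℝ) ^ (-s)

lemma sig_nonneg (s : ℝ) (k : ℕ) : 0 ≤ sig s k := sum_nonneg fun _ _ => by positivity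

lemma sig_sq (s : ℝ) (hs : 0 < s) : ∃ C : ℝ, 1 ≤ C ∧ ∀ k : ℕ, k ≠ 0 →
    sig s k ^ 2 ≤ C * sig (s / 2) k := by
  obtain ⟨C, hC, hd⟩ := divisor_bound (s / 4) (by positivity)
  refine ⟨C ^ 2, one_le_pow₀ hC, fun k hk => ?_⟩
  unfold sig
  rw [sq, sum_mul_sum, ← sum_product']
  have hmaps : ∀ p ∈ k.divisors ×ˢ k.divisors, Nat.lcm p.1 p.2 ∈ k.divisors := by
    intro p hp
    simp only [mem_product, Nat.mem_divisors] at hp ⊢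
    exact ⟨Nat.lcm_dvd hp.1.1 hp.2.1, hk⟩
  rw [← sum_fiberwise_of_maps_to hmaps, mul_sum]
  apply sum_le_sum
  intro m hm
  have hm0 : m ≠ 0 := by
    rintro rfl; simp at hm
  have hmr : (0 : ℝ) < m := by exact_mod_cast Nat.pos_of_ne_zero hm0
  have h1 : ∀ p ∈ (k.divisors ×ˢ k.divisors).filter (fun p => Nat.lcm p.1 p.2 = m),
      (p.1 : ℝ) ^ (-s) * (p.2 : ℝ) ^ (-s) ≤ (m : ℝ) ^ (-s) := by
    intro p hp
    obtain ⟨hp1, hp2⟩ := mem_filter.1 hp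
    rw [← Real.mul_rpow (by positivity) (by positivity)]
    apply Real.rpow_le_rpow_of_nonpos hmr _ (by linarith)
    have : m ≤ p.1 * p.2 := by
      rw [← hp2]
      apply Nat.le_of_dvd
      · simp only [mem_product] at hp1
        have := Nat.pos_of_mem_divisors hp1.1
        have := Nat.pos_of_mem_divisors hp1.2
        positivity
      · exact Nat.lcm_dvd (Dvd.intro _ rfl) (Dvd.intro_left _ rfl)
    exact_mod_cast this
  refine (sum_le_card_nsmul _ _ _ h1).trans ?_
  rw [nsmul_eq_mul]
  have h2 : (((k.divisors ×ˢ k.divisors).filter (fun p => Nat.lcm p.1 p.2 = m)).card : ℝ)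
      ≤ (C * (m : ℝ) ^ (s / 4)) ^ 2 := by
    have h3 : (k.divisors ×ˢ k.divisors).filter (fun p => Nat.lcm p.1 p.2 = m) ⊆
        m.divisors ×ˢ m.divisors := by
      intro p hp
      obtain ⟨hp1, hp2⟩ := mem_filter.1 hp
      simp only [mem_product, Nat.mem_divisors]
      rw [← hp2]
      exact ⟨⟨Nat.dvd_lcm_left _ _, hp2 ▸ hm0⟩, Nat.dvd_lcm_right _ _, hp2 ▸ hm0⟩
    have h4 := card_le_card h3
    rw [card_product] at h4
    have h5 : (((k.divisors ×ˢ k.divisors).filter (fun p => Nat.lcm p.1 p.2 = m)).card : ℝ)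
      ≤ (m.divisors.card : ℝ) * m.divisors.card := by exact_mod_cast h4
    refine h5.trans ?_
    rw [sq]
    have := hd m hm0
    gcongr
  calc _ ≤ (C * (m : ℝ) ^ (s / 4)) ^ 2 * (m : ℝ) ^ (-s) := by gcongr
    _ = C ^ 2 * (((m : ℝ) ^ (s / 4)) ^ 2 * (m : ℝ) ^ (-s)) := by ring
    _ = C ^ 2 * (m : ℝ) ^ (-(s / 2)) := by
        rw [← Real.rpow_natCast ((m : ℝ) ^ (s / 4)), ← Real.rpow_mul hmr.le, ← Real.rpow_add hmr]
        congr 2; push_cast; ring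

lemma sig_pow8 : ∃ C : ℝ, 1 ≤ C ∧ ∀ k : ℕ, k ≠ 0 →
    sig (1 / 16) k ^ 8 ≤ C * sig (1 / 128) k := by
  obtain ⟨C1, h1, H1⟩ := sig_sq (1 / 16) (by norm_num)
  obtain ⟨C2, h2, H2⟩ := sig_sq (1 / 32) (by norm_num)
  obtain ⟨C3, h3, H3⟩ := sig_sq (1 / 64) (by norm_num)
  refine ⟨C1 ^ 4 * C2 ^ 2 * C3, ?_, fun k hk => ?_⟩
  · have := one_le_pow₀ (n := 4) h1
    have := one_le_pow₀ (n := 2) h2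
    nlinarith [mul_le_mul this h3 (by norm_num) (by positivity), 
      one_le_mul_of_one_le_of_one_le (one_le_mul_of_one_le_of_one_le ‹1 ≤ C1 ^ 4› this) h3]
  have e1 := H1 k hk; have e2 := H2 k hk; have e3 := H3 k hk
  norm_num at e1 e2 e3
  have n1 := sig_nonneg (1 / 16) k; have n2 := sig_nonneg (1 / 32) k
  have n3 := sig_nonneg (1 / 64) k
  norm_num at n1 n2 n3 ⊢
  calc sig (1 / 16) k ^ 8 = (sig (1 / 16) k ^ 2) ^ 4 := by ring
    _ ≤ (C1 * sig (1 / 32) k) ^ 4 := by gcongr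
    _ = C1 ^ 4 * (sig (1 / 32) k ^ 2) ^ 2 := by ring
    _ ≤ C1 ^ 4 * (C2 * sig (1 / 64) k) ^ 2 := by gcongr
    _ = C1 ^ 4 * C2 ^ 2 * (sig (1 / 64) k ^ 2) := by ring
    _ ≤ C1 ^ 4 * C2 ^ 2 * (C3 * sig (1 / 128) k) := by gcongr
    _ = _ := by ring

lemma sig_mean (s : ℝ) (hs : 0 < s) : ∃ C : ℝ, 0 < C ∧ ∀ H : ℕ,
    ∑ k ∈ Finset.Icc 1 H, sig s k ≤ C * H := by
  have hsum : Summable (fun n : ℕ => (n : ℝ) ^ (-(1 + s))) :=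
    Real.summable_nat_rpow.2 (by linarith)
  refine ⟨∑' n : ℕ, (n : ℝ) ^ (-(1 + s)) + 1, ?_, fun H => ?_⟩
  · have : 0 ≤ ∑' n : ℕ, (n : ℝ) ^ (-(1 + s)) := tsum_nonneg fun n => by positivity
    linarith
  unfold sig
  have h1 : ∑ k ∈ Finset.Icc 1 H, ∑ q ∈ k.divisors, (q : ℝ) ^ (-s) =
      ∑ q ∈ Finset.Icc 1 H, ∑ k ∈ (Finset.Ioc 0 H).filter (fun k => q ∣ k), (q : ℝ) ^ (-s) := by
    apply sum_comm'
    intro k q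
    simp only [Finset.mem_Icc, Nat.mem_divisors, mem_filter, Finset.mem_Ioc]
    constructor
    · rintro ⟨⟨a, b⟩, c, d⟩
      have := Nat.le_of_dvd (by omega) c
      have := Nat.pos_of_dvd_of_pos c (by omega)
      refine ⟨⟨⟨?_, b⟩, c⟩, ?_, ?_⟩ <;> omega
    · rintro ⟨⟨⟨a, b⟩, c⟩, d, e⟩
      refine ⟨⟨?_, b⟩, c, ?_⟩ <;> omega
  rw [h1]
  calc _ ≤ ∑ q ∈ Finset.Icc 1 H, (q : ℝ) ^ (-(1 + s)) * H := by
        apply sum_le_sum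
        intro q hq
        have hq1 : (0 : ℝ) < q := by exact_mod_cast (Finset.mem_Icc.1 hq).1
        rw [sum_const, nsmul_eq_mul, Nat.Ioc_filter_dvd_card_eq_div]
        have : ((H / q : ℕ) : ℝ) ≤ H / q := Nat.cast_div_le
        calc ((H / q : ℕ) : ℝ) * (q : ℝ) ^ (-s) ≤ H / q * (q : ℝ) ^ (-s) := by gcongr
          _ = (q : ℝ) ^ (-(1 + s)) * H := by
            rw [neg_add, Real.rpow_add hq1, Real.rpow_neg_one]; ring
    _ = (∑ q ∈ Finset.Icc 1 H, (q : ℝ) ^ (-(1 + s))) * H := by rw [sum_mul]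
    _ ≤ _ := by
        gcongr
        have := hsum.sum_le_tsum (Finset.Icc 1 H) (fun n _ => by positivity)
        linarith

/-- The divisor weight. -/
def ww (Q : ℕ) (m : ℤ) : ℝ := ∑ q ∈ Finset.Icc 1 Q, if (q : ℤ) ∣ m then (q : ℝ) ^ (-(1 / 16) : ℝ) else 0

lemma ww_nonneg (Q : ℕ) (m : ℤ) : 0 ≤ ww Q m :=
  sum_nonneg fun q _ => by split_ifs <;> positivity

lemma ww_le_card (Q : ℕ) (m : ℤ) : ww Q m ≤ Q := by
  unfold ww
  calc _ ≤ ∑ q ∈ Finset.Icc 1 Q, (1 : ℝ) := by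
        apply sum_le_sum
        intro q hq
        have hq1 : (1 : ℝ) ≤ q := by exact_mod_cast (Finset.mem_Icc.1 hq).1
        split_ifs
        · exact Real.rpow_le_one_of_one_le_of_nonpos hq1 (by norm_num)
        · norm_num
    _ = Q := by simp

lemma ww_le_sig (Q : ℕ) (m : ℤ) (hm : m ≠ 0) : ww Q m ≤ sig (1 / 16) m.natAbs := by
  unfold ww sig
  rw [← sum_filter]
  apply sum_le_sum_of_subset_of_nonneg
  · intro q hq
    have := (mem_filter.1 hq).2
    rw [Nat.mem_divisors]
    exact ⟨Int.natCast_dvd.1 this, by omega⟩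
  · intro q _ _; positivity

lemma moment : ∃ C : ℝ, 1 ≤ C ∧ ∀ Q H l : ℕ, Q ^ 8 ≤ 2 * H → l < H →
    ∑ k ∈ range H, ww Q ((k : ℤ) - l) ^ 8 ≤ C * H := by
  obtain ⟨C1, hC1, H1⟩ := sig_pow8
  obtain ⟨C2, hC2, H2⟩ := sig_mean (1 / 128) (by norm_num)
  refine ⟨2 + 4 * C1 * C2, by nlinarith, fun Q H l hQ hl => ?_⟩
  have hl' : l ∈ range H := mem_range.2 hl
  rw [← add_sum_erase _ _ hl']
  have h1 : ww Q ((l : ℤ) - l) ^ 8 ≤ 2 * (H : ℝ) := by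
    calc ww Q ((l : ℤ) - l) ^ 8 ≤ (Q : ℝ) ^ 8 := by
          gcongr
          · exact ww_nonneg _ _
          · exact ww_le_card _ _
      _ ≤ 2 * (H : ℝ) := by exact_mod_cast hQ
  set T : ℕ → ℝ := fun j => sig (1 / 16) j ^ 8 with hT
  have hT0 : ∀ j, 0 ≤ T j := fun j => pow_nonneg (sig_nonneg _ _) 8
  have h2 : ∑ k ∈ (range H).erase l, ww Q ((k : ℤ) - l) ^ 8 ≤
      ∑ k ∈ (range H).erase l, T (((k : ℤ) - l).natAbs / 1) := by
    apply sum_le_sum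
    intro k hk
    have := (mem_erase.1 hk).1
    rw [Nat.div_one]
    simp only [hT]
    gcongr
    · exact ww_nonneg _ _
    · exact ww_le_sig _ _ (by omega)
  have h3 := sum_dvd H 1 le_rfl T hT0
  have h4 : ∑ k ∈ (range H).erase l, T (((k : ℤ) - l).natAbs / 1) ≤
      ∑ h ∈ (Finset.Icc (-(2 * H : ℤ)) (2 * H : ℤ)).filter (fun h => ((1 : ℕ) : ℤ) ∣ h ∧ h ≠ 0),
      T (h.natAbs / 1) := by
    have hinj : Set.InjOn (fun k : ℕ => (k : ℤ) - l) ((range H).erase l : Finset ℕ) := by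
      intro a _ b _ hab
      simp only at hab; omega
    rw [← sum_image (f := fun h : ℤ => T (h.natAbs / 1)) hinj]
    apply sum_le_sum_of_subset_of_nonneg
    · intro h hh
      obtain ⟨k, hk, rfl⟩ := mem_image.1 hh
      simp only [mem_erase, mem_range] at hk
      simp only [mem_filter, Finset.mem_Icc]
      refine ⟨⟨by omega, by omega⟩, by simp, by omega⟩
    · intro h _ _; exact hT0 _
  have h5 : ∑ j ∈ Finset.Icc 1 (2 * H / 1), T j ≤ C1 * (C2 * (2 * H : ℕ)) := by
    rw [Nat.div_one]
    refine le_trans (sum_le_sum (fun k hk => H1 k ?_)) ?_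
    · have := (Finset.mem_Icc.1 hk).1; omega
    · rw [← mul_sum]
      have := H2 (2 * H)
      gcongr
  push_cast at h5
  have : C1 * (C2 * (2 * H)) * 2 = 4 * C1 * C2 * H := by ring
  linarith

/-- The exponential sum sampled at `j / (4 N²)`. -/
def FF (N : ℕ) (f : ℤ → ℂ) (j : ℕ) : ℂ :=
  ∑ x ∈ Finset.Icc (-(N : ℤ)) (N : ℤ), f x * ee (((x ^ 2 : ℤ) : ℝ) * j / ((4 * N ^ 2 : ℕ) : ℝ))

/-- Pairs with a given difference of squares. -/
def fib (N : ℕ) (m : ℤ) : Finset (ℤ × ℤ) :=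
  (Finset.Icc (-(N : ℤ)) (N : ℤ) ×ˢ Finset.Icc (-(N : ℤ)) (N : ℤ)).filter
    (fun p => p.1 ^ 2 - p.2 ^ 2 = m)

lemma fib_card (N : ℕ) (m : ℤ) (hm : m ≠ 0) : (fib N m).card ≤ 2 * m.natAbs.divisors.card := by
  classical
  have hinj : Set.InjOn (fun p : ℤ × ℤ => p.1 - p.2) (fib N m : Finset (ℤ × ℤ)) := by
    rintro ⟨x, y⟩ hp ⟨x', y'⟩ hp' h
    have h1 := (mem_filter.1 hp).2
    have h2 := (mem_filter.1 hp').2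
    simp only at h h1 h2
    have h3 : (x - y) * (x + y) = m := by rw [← h1]; ring
    have h4 : (x - y) * (x' + y') = m := by rw [h, ← h2]; ring
    have h5 : x - y ≠ 0 := by
      intro h0; rw [h0, zero_mul] at h3; exact hm h3.symm
    have h6 : x + y = x' + y' := mul_left_cancel₀ h5 (h3.trans h4.symm)
    ext <;> simp <;> omega
  have hsub : (fib N m).image (fun p : ℤ × ℤ => p.1 - p.2) ⊆
      m.natAbs.divisors.image (fun d : ℕ => (d : ℤ)) ∪ m.natAbs.divisors.image (fun d : ℕ => -(d : ℤ)) := by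
    intro d hd
    obtain ⟨⟨x, y⟩, hp, rfl⟩ := mem_image.1 hd
    have h1 := (mem_filter.1 hp).2
    simp only at h1 ⊢
    have h3 : x - y ∣ m := ⟨x + y, by rw [← h1]; ring⟩
    have h4 : (x - y).natAbs ∈ m.natAbs.divisors := by
      rw [Nat.mem_divisors]; exact ⟨Int.natAbs_dvd_natAbs.2 h3, by omega⟩
    rw [mem_union, mem_image, mem_image]
    rcases Int.natAbs_eq (x - y) with h | h
    · exact Or.inl ⟨_, h4, h.symm⟩
    · exact Or.inr ⟨_, h4, h.symm⟩
  calc (fib N m).card = ((fib N m).image (fun p : ℤ × ℤ => p.1 - p.2)).card :=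
        (card_image_of_injOn hinj).symm
    _ ≤ _ := card_le_card hsub
    _ ≤ _ := card_union_le _ _
    _ ≤ m.natAbs.divisors.card + m.natAbs.divisors.card :=
        add_le_add card_image_le card_image_le
    _ = _ := by ring

lemma fib_zero (N : ℕ) (g : ℤ → ℝ) (hg : ∀ x, 0 ≤ g x) :
    ∑ p ∈ fib N 0, g p.1 * g p.2 ≤ 2 * ∑ x ∈ Finset.Icc (-(N : ℤ)) (N : ℤ), g x ^ 2 := by
  classical
  set I := Finset.Icc (-(N : ℤ)) (N : ℤ) with hI
  have key : ∀ x : ℤ, ((I.filter (fun y => x ^ 2 - y ^ 2 = 0)).card : ℝ) ≤ 2 := by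
    intro x
    have : I.filter (fun y => x ^ 2 - y ^ 2 = 0) ⊆ {x, -x} := by
      intro y hy
      have h := (mem_filter.1 hy).2
      have h2 : (x - y) * (x + y) = 0 := by rw [← h]; ring
      simp only [mem_insert, mem_singleton]
      rcases mul_eq_zero.1 h2 with h | h <;> omega
    exact_mod_cast (card_le_card this).trans card_le_two
  have h1 : ∑ p ∈ fib N 0, g p.1 ^ 2 ≤ 2 * ∑ x ∈ I, g x ^ 2 := by
    unfold fib
    rw [sum_filter, sum_product, mul_sum]
    apply sum_le_sum
    intro x _
    simp only
    rw [← sum_filter, sum_const, nsmul_eq_mul]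
    exact mul_le_mul_of_nonneg_right (key x) (by positivity)
  have h2 : ∑ p ∈ fib N 0, g p.2 ^ 2 ≤ 2 * ∑ x ∈ I, g x ^ 2 := by
    unfold fib
    rw [sum_filter, sum_product_right, mul_sum]
    apply sum_le_sum
    intro x _
    simp only
    rw [← sum_filter, sum_const, nsmul_eq_mul]
    have e : (Finset.Icc (-(N : ℤ)) N).filter (fun y => y ^ 2 - x ^ 2 = 0) =
        I.filter (fun y => x ^ 2 - y ^ 2 = 0) := by
      apply filter_congr; intro y _; constructor <;> intro h <;> linarith
    rw [e]
    exact mul_le_mul_of_nonneg_right (key x) (by positivity)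
  have h3 : ∑ p ∈ fib N 0, g p.1 * g p.2 ≤ ∑ p ∈ fib N 0, (g p.1 ^ 2 / 2 + g p.2 ^ 2 / 2) := by
    apply sum_le_sum; intro p _; nlinarith [sq_nonneg (g p.1 - g p.2)]
  rw [sum_add_distrib, ← sum_div, ← sum_div] at h3
  linarith

lemma L4 : ∃ C : ℝ, 1 ≤ C ∧ ∀ N : ℕ, 1 ≤ N → ∀ f : ℤ → ℂ,
    ∑ j ∈ range (4 * N ^ 2), ‖FF N f j‖ ^ 4 ≤
      C * ((4 * N ^ 2 : ℕ) : ℝ) * (N : ℝ) ^ (1 / 64 : ℝ) *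
        (∑ x ∈ Finset.Icc (-(N : ℤ)) (N : ℤ), ‖f x‖ ^ 2) ^ 2 := by
  obtain ⟨C, hC, hd⟩ := divisor_bound (1 / 128) (by norm_num)
  refine ⟨4 + 2 * C, by linarith, fun N hN f => ?_⟩
  have hNr : (1 : ℝ) ≤ N := by exact_mod_cast hN
  set I := Finset.Icc (-(N : ℤ)) (N : ℤ) with hI
  set S := ∑ x ∈ I, ‖f x‖ ^ 2 with hS
  set M := 4 * N ^ 2 with hM
  have hM0 : 0 < M := by positivity
  set D := Finset.Icc (-(N ^ 2 : ℤ)) (N ^ 2 : ℤ) with hD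
  set c : ℤ → ℂ := fun m => ∑ p ∈ fib N m, f p.1 * (starRingEnd ℂ) (f p.2) with hc
  have hsq : ∀ x ∈ I, 0 ≤ x ^ 2 ∧ x ^ 2 ≤ (N : ℤ) ^ 2 := by
    intro x hx
    rw [Finset.mem_Icc] at hx
    exact ⟨sq_nonneg x, sq_le_sq' hx.1 hx.2⟩
  have hmaps : ∀ p ∈ I ×ˢ I, p.1 ^ 2 - p.2 ^ 2 ∈ D := by
    intro p hp
    rw [mem_product] at hp
    have := hsq _ hp.1
    have := hsq _ hp.2
    rw [Finset.mem_Icc]; constructor <;> linarith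
  have hF : ∀ j : ℕ, ‖FF N f j‖ ^ 4 = ‖∑ m ∈ D, c m * ee (m * j / M)‖ ^ 2 := by
    intro j
    have e1 : ((‖FF N f j‖ ^ 2 : ℝ) : ℂ) = ∑ m ∈ D, c m * ee (m * j / M) := by
      unfold FF
      rw [norm_sq_sum_eq, ← sum_product', ← sum_fiberwise_of_maps_to hmaps]
      apply sum_congr rfl
      intro m _
      simp only [hc]
      rw [sum_mul]
      apply sum_congr rfl
      intro p hp
      have h1 := (mem_filter.1 hp).2
      have h2 : (m : ℝ) * j / M = ((p.1 ^ 2 : ℤ) : ℝ) * j / M + -(((p.2 ^ 2 : ℤ) : ℝ) * j / M) := by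
        rw [← h1]; push_cast; ring
      rw [map_mul, ee_conj, h2, ee_add]; ring
    rw [← e1, Complex.norm_real, Real.norm_of_nonneg (by positivity)]; ring
  have hB := bessel1 M hM0 D (fun m => m) (by
    intro a ha b hb h
    rw [Finset.mem_Icc] at ha hb
    have hN2 : (0 : ℤ) < N ^ 2 := by positivity
    have := Int.eq_zero_of_abs_lt_dvd h (by rw [abs_lt, hM]; push_cast; constructor <;> linarith)
    linarith) c
  rw [sum_congr rfl (fun j _ => hF j), hB]
  have hc0 : ‖c 0‖ ≤ 2 * S := by
    refine le_trans (norm_sum_le _ _) ?_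
    have := fib_zero N (fun x => ‖f x‖) (fun x => norm_nonneg _)
    simpa [norm_mul] using this
  have hcm : ∀ m ∈ D.erase 0, ‖c m‖ ^ 2 ≤ 2 * C * (N : ℝ) ^ (1 / 64 : ℝ) *
      ∑ p ∈ fib N m, ‖f p.1‖ ^ 2 * ‖f p.2‖ ^ 2 := by
    intro m hm
    obtain ⟨hm0, hmD⟩ := mem_erase.1 hm
    have h1 : ‖c m‖ ≤ ∑ p ∈ fib N m, ‖f p.1‖ * ‖f p.2‖ := by
      refine le_trans (norm_sum_le _ _) (le_of_eq ?_)
      apply sum_congr rfl; intro p _; simp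
    have h2 : ‖c m‖ ^ 2 ≤ (fib N m).card * ∑ p ∈ fib N m, (‖f p.1‖ * ‖f p.2‖) ^ 2 := by
      refine le_trans ?_ sq_sum_le_card_mul_sum_sq
      gcongr
    simp only [mul_pow] at h2
    refine h2.trans ?_
    gcongr
    have h3 : ((fib N m).card : ℝ) ≤ 2 * m.natAbs.divisors.card := by
      exact_mod_cast fib_card N m hm0
    have h4 := hd m.natAbs (by omega)
    have h5 : (m.natAbs : ℝ) ^ (1 / 128 : ℝ) ≤ (N : ℝ) ^ (1 / 64 : ℝ) := by
      have : (N : ℝ) ^ (1 / 64 : ℝ) = ((N : ℝ) ^ 2) ^ (1 / 128 : ℝ) := by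
        rw [← Real.rpow_natCast, ← Real.rpow_mul (by positivity)]; norm_num
      rw [this]
      gcongr
      rw [Finset.mem_Icc] at hmD
      have : (m.natAbs : ℤ) ≤ N ^ 2 := by omega
      exact_mod_cast this
    nlinarith
  have h0D : (0 : ℤ) ∈ D := by
    rw [Finset.mem_Icc]; constructor <;> nlinarith [sq_nonneg (N : ℤ)]
  have hNp : 1 ≤ (N : ℝ) ^ (1 / 64 : ℝ) := Real.one_le_rpow hNr (by norm_num)
  have hfib : ∑ m ∈ D.erase 0, ∑ p ∈ fib N m, ‖f p.1‖ ^ 2 * ‖f p.2‖ ^ 2 ≤ S ^ 2 := by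
    have e : S ^ 2 = ∑ m ∈ D, ∑ p ∈ fib N m, ‖f p.1‖ ^ 2 * ‖f p.2‖ ^ 2 := by
      rw [sq, hS, sum_mul_sum, ← sum_product', ← sum_fiberwise_of_maps_to hmaps]
      rfl
    rw [e]
    apply sum_le_sum_of_subset_of_nonneg (erase_subset _ _)
    intro m _ _
    exact sum_nonneg fun p _ => by positivity
  have hS0 : 0 ≤ S := sum_nonneg fun _ _ => by positivity
  have hmain : ∑ m ∈ D, ‖c m‖ ^ 2 ≤ (4 + 2 * C) * (N : ℝ) ^ (1 / 64 : ℝ) * S ^ 2 := by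
    rw [← add_sum_erase _ _ h0D]
    have h1 : ‖c 0‖ ^ 2 ≤ 4 * S ^ 2 := by
      calc ‖c 0‖ ^ 2 ≤ (2 * S) ^ 2 := by gcongr
        _ = _ := by ring
    have h2 := sum_le_sum hcm
    rw [← mul_sum] at h2
    have h3 : 2 * C * (N : ℝ) ^ (1 / 64 : ℝ) *
      ∑ m ∈ D.erase 0, ∑ p ∈ fib N m, ‖f p.1‖ ^ 2 * ‖f p.2‖ ^ 2 ≤
      2 * C * (N : ℝ) ^ (1 / 64 : ℝ) * S ^ 2 := by gcongr
    have h4 : 4 * S ^ 2 ≤ 4 * (N : ℝ) ^ (1 / 64 : ℝ) * S ^ 2 := by nlinarith [sq_nonneg S]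
    linarith
  calc (M : ℝ) * ∑ m ∈ D, ‖c m‖ ^ 2 ≤ M * ((4 + 2 * C) * (N : ℝ) ^ (1 / 64 : ℝ) * S ^ 2) := by gcongr
    _ = _ := by ring

/-- Unnormalized Fejér kernel. -/
def Fej (H : ℕ) (t : ℝ) : ℝ := ‖∑ k ∈ range H, ee (k * t)‖ ^ 2

lemma Fej_nonneg (H : ℕ) (t : ℝ) : 0 ≤ Fej H t := by unfold Fej; positivity

lemma Fej_add_int (H : ℕ) (t : ℝ) (b : ℤ) : Fej H (t + b) = Fej H t := by
  unfold Fej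
  congr 2
  apply sum_congr rfl
  intro k _
  have : (k : ℝ) * (t + b) = k * t + ((k * b : ℤ) : ℝ) := by push_cast; ring
  rw [this, ee_add_int]

lemma ee_re (t : ℝ) : (ee t).re = Real.cos (2 * Real.pi * t) := by
  have h : ee t = Complex.exp (((2 * Real.pi * t : ℝ) : ℂ) * Complex.I) := by
    unfold ee; push_cast; ring_nf
  rw [h, Complex.exp_ofReal_mul_I_re]

lemma Fej_lower (H : ℕ) (t : ℝ) (ht : 8 * (H : ℝ) * |t| ≤ 1) : (H : ℝ) ^ 2 ≤ 4 * Fej H t := by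
  have h1 : (H : ℝ) / 2 ≤ ‖∑ k ∈ range H, ee (k * t)‖ := by
    refine le_trans ?_ (Complex.re_le_norm _)
    rw [Complex.re_sum]
    have : ∑ k ∈ range H, (1 / 2 : ℝ) ≤ ∑ k ∈ range H, (ee (k * t)).re := by
      apply sum_le_sum
      intro k hk
      rw [ee_re]
      have hk' : (k : ℝ) ≤ H := by exact_mod_cast (mem_range.1 hk).le
      have h2 := Real.one_sub_sq_div_two_le_cos (x := 2 * Real.pi * (k * t))
      have h3 : |2 * Real.pi * (k * t)| ≤ 1 := by
        have hpi := Real.pi_lt_four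
        have hpi0 := Real.pi_pos
        rw [abs_mul, abs_of_pos (by positivity : 0 < 2 * Real.pi), abs_mul, Nat.abs_cast]
        calc 2 * Real.pi * (k * |t|) ≤ 2 * 4 * (H * |t|) := by gcongr
          _ ≤ 1 := by linarith
      have h4 : (2 * Real.pi * (k * t)) ^ 2 ≤ 1 := by
        rw [← sq_abs]; exact pow_le_one₀ (abs_nonneg _) h3
      linarith
    simp at this
    linarith
  unfold Fej
  have : ((H : ℝ) / 2) ^ 2 ≤ ‖∑ k ∈ range H, ee (k * t)‖ ^ 2 := by gcongr
  linarith

lemma Fej_eq (H : ℕ) (t : ℝ) :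
    ((Fej H t : ℝ) : ℂ) = ∑ l ∈ range H, ∑ k ∈ range H, ee (((k : ℤ) - l : ℤ) * t) := by
  unfold Fej
  rw [norm_sq_sum_eq, sum_comm]
  apply sum_congr rfl; intro l _
  apply sum_congr rfl; intro k _
  rw [ee_conj, ← ee_add]; congr 1; push_cast; ring

/-- Fourier transform of a set. -/
def hatA (M : ℕ) (A : Finset ℕ) (v : ℤ) : ℂ := ∑ j ∈ A, ee (v * j / M)

lemma Fej_sum (M q H : ℕ) (hq : 1 ≤ q) (A : Finset ℕ) :
    ∑ r ∈ A, ∑ s ∈ A, ∑ a ∈ range q, Fej H (2 * (((r : ℝ) - s) / M) - a / q) =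
      ∑ l ∈ range H, ∑ k ∈ range H, (if (q : ℤ) ∣ (k : ℤ) - l then (q : ℝ) else 0) *
        ‖hatA M A (2 * ((k : ℤ) - l))‖ ^ 2 := by
  have key : ((∑ r ∈ A, ∑ s ∈ A, ∑ a ∈ range q, Fej H (2 * (((r : ℝ) - s) / M) - a / q) : ℝ) : ℂ) =
      ((∑ l ∈ range H, ∑ k ∈ range H, (if (q : ℤ) ∣ (k : ℤ) - l then (q : ℝ) else 0) *
        ‖hatA M A (2 * ((k : ℤ) - l))‖ ^ 2 : ℝ) : ℂ) := by
    have e1 : ∀ l k : ℕ, (((if (q : ℤ) ∣ (k : ℤ) - l then (q : ℝ) else 0) *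
        ‖hatA M A (2 * ((k : ℤ) - l))‖ ^ 2 : ℝ) : ℂ) = 
        ∑ r ∈ A, ∑ s ∈ A, ∑ a ∈ range q,
          ee (((k : ℤ) - l : ℤ) * (2 * (((r : ℝ) - s) / M) - a / q)) := by
      intro l k
      have h1 := ee_orth q hq ((l : ℤ) - k)
      have h2 : ((if (q : ℤ) ∣ (k : ℤ) - l then (q : ℝ) else 0 : ℝ) : ℂ) =
          ∑ a ∈ range q, ee (((l : ℤ) - k : ℤ) * a / q) := by
        rw [h1]
        have : (q : ℤ) ∣ (l : ℤ) - k ↔ (q : ℤ) ∣ (k : ℤ) - l := by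
          rw [← dvd_neg, neg_sub]
        simp only [this]
        split_ifs <;> simp
      rw [Complex.ofReal_mul, h2]
      unfold hatA
      rw [norm_sq_sum_eq, mul_sum]
      apply sum_congr rfl; intro r _
      rw [mul_sum]
      apply sum_congr rfl; intro s _
      rw [sum_mul]
      apply sum_congr rfl; intro a _
      rw [ee_conj, ← ee_add, ← ee_add]
      congr 1; push_cast; ring
    push_cast [-Complex.ofReal_mul]
    have e2 : ∀ l ∈ range H, ∑ k ∈ range H, (((if (q : ℤ) ∣ (k : ℤ) - l then (q : ℝ) else 0) *
        ‖hatA M A (2 * ((k : ℤ) - l))‖ ^ 2 : ℝ) : ℂ) = ∑ k ∈ range H, ∑ r ∈ A, ∑ s ∈ A, 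
          ∑ a ∈ range q, ee (((k : ℤ) - l : ℤ) * (2 * (((r : ℝ) - s) / M) - a / q)) :=
      fun l _ => sum_congr rfl fun k _ => e1 l k
    have e3 : ∀ r s a : ℕ, ((Fej H (2 * (((r : ℝ) - s) / M) - a / q) : ℝ) : ℂ) =
        ∑ l ∈ range H, ∑ k ∈ range H,
          ee (((k : ℤ) - l : ℤ) * (2 * (((r : ℝ) - s) / M) - a / q)) := fun r s a => Fej_eq _ _
    have e4 : ∀ r s : ℕ, ∑ a ∈ range q, ((Fej H (2 * (((r : ℝ) - s) / M) - a / q) : ℝ) : ℂ) =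
        ∑ l ∈ range H, ∑ k ∈ range H, ∑ a ∈ range q,
          ee (((k : ℤ) - l : ℤ) * (2 * (((r : ℝ) - s) / M) - a / q)) := by
      intro r s
      rw [sum_congr rfl (fun a _ => e3 r s a), sum_comm]
      apply sum_congr rfl; intro l _
      rw [sum_comm]
    have e5 : ∀ r : ℕ, ∑ s ∈ A, ∑ a ∈ range q,
        ((Fej H (2 * (((r : ℝ) - s) / M) - a / q) : ℝ) : ℂ) =
        ∑ l ∈ range H, ∑ k ∈ range H, ∑ s ∈ A, ∑ a ∈ range q,
          ee (((k : ℤ) - l : ℤ) * (2 * (((r : ℝ) - s) / M) - a / q)) := by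
      intro r
      rw [sum_congr rfl (fun s _ => e4 r s), sum_comm]
      apply sum_congr rfl; intro l _
      rw [sum_comm]
    rw [sum_congr rfl e2, sum_congr rfl (fun r _ => e5 r), sum_comm]
    apply sum_congr rfl; intro l _
    rw [sum_comm]
  exact_mod_cast key

lemma hatA_le (M : ℕ) (A : Finset ℕ) (v : ℤ) : ‖hatA M A v‖ ≤ A.card := by
  unfold hatA
  refine (norm_sum_le _ _).trans ?_
  simp [ee_norm]

lemma holder8 : ∃ C : ℝ, 1 ≤ C ∧ ∀ (N Q H l : ℕ) (A : Finset ℕ), A ⊆ range (4 * N ^ 2) →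
    Q ^ 8 ≤ 2 * H → H ≤ N ^ 2 → l < H →
    ∑ k ∈ range H, ww Q ((k : ℤ) - l) * ‖hatA (4 * N ^ 2) A (2 * ((k : ℤ) - l))‖ ^ 2 ≤
      C * (((4 * N ^ 2 : ℕ) : ℝ) * A.card) ^ (7 / 8 : ℝ) * ((A.card : ℝ) ^ 2 * H) ^ (1 / 8 : ℝ) := by
  obtain ⟨C, hC, hm⟩ := moment
  refine ⟨C, hC, fun N Q H l A hA hQ hH hl => ?_⟩
  set M := 4 * N ^ 2 with hM
  have hM0 : 0 < M := by omega
  set w : ℕ → ℝ := fun k => ‖hatA M A (2 * ((k : ℤ) - l))‖ ^ 2 with hw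
  have hw0 : ∀ k, 0 ≤ w k := fun k => by positivity
  have h1 := Real.inner_le_weight_mul_Lp_of_nonneg (range H) (p := 8) (by norm_num) w
    (fun k => ww Q ((k : ℤ) - l)) hw0 (fun k => ww_nonneg _ _)
  have h2 : ∑ k ∈ range H, w k ≤ M * A.card := by
    apply bessel2 M hM0 (range H) (fun k => 2 * ((k : ℤ) - l)) _ A hA
    intro a ha b hb h
    rw [mem_range] at ha hb
    have := Int.eq_zero_of_abs_lt_dvd h (by rw [abs_lt]; constructor <;> omega)
    omega
  have h3 : ∑ k ∈ range H, w k * ww Q ((k : ℤ) - l) ^ (8 : ℝ) ≤ (A.card : ℝ) ^ 2 * (C * H) := by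
    calc _ ≤ ∑ k ∈ range H, (A.card : ℝ) ^ 2 * ww Q ((k : ℤ) - l) ^ 8 := by
          apply sum_le_sum
          intro k _
          have : ww Q ((k : ℤ) - l) ^ (8 : ℝ) = ww Q ((k : ℤ) - l) ^ 8 := by
            exact_mod_cast Real.rpow_natCast _ 8
          rw [this]
          have := ww_nonneg Q ((k : ℤ) - l)
          have := hatA_le M A (2 * ((k : ℤ) - l))
          simp only [hw]
          gcongr
      _ ≤ _ := by
          rw [← mul_sum]
          have := hm Q H l hQ hl
          gcongr
  have h4 : ∑ k ∈ range H, ww Q ((k : ℤ) - l) * ‖hatA M A (2 * ((k : ℤ) - l))‖ ^ 2 =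
      ∑ k ∈ range H, w k * ww Q ((k : ℤ) - l) := by
    apply sum_congr rfl; intro k _; simp only [hw]; ring
  rw [h4]
  refine h1.trans ?_
  have e1 : (1 - (8 : ℝ)⁻¹) = 7 / 8 := by norm_num
  have e2 : ((8 : ℝ)⁻¹) = 1 / 8 := by norm_num
  rw [e1, e2]
  have n1 : 0 ≤ ∑ k ∈ range H, w k := sum_nonneg fun k _ => hw0 k
  have n2 : 0 ≤ ∑ k ∈ range H, w k * ww Q ((k : ℤ) - l) ^ (8 : ℝ) :=
    sum_nonneg fun k _ => mul_nonneg (hw0 k) (Real.rpow_nonneg (ww_nonneg _ _) _)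
  calc _ ≤ ((M : ℝ) * A.card) ^ (7 / 8 : ℝ) * ((A.card : ℝ) ^ 2 * (C * H)) ^ (1 / 8 : ℝ) := by
        gcongr
    _ = C ^ (1 / 8 : ℝ) * (((M : ℝ) * A.card) ^ (7 / 8 : ℝ) * ((A.card : ℝ) ^ 2 * H) ^ (1 / 8 : ℝ)) := by
        rw [show (A.card : ℝ) ^ 2 * (C * H) = C * ((A.card : ℝ) ^ 2 * H) by ring,
          Real.mul_rpow (x := C) (by positivity) (by positivity)]; ring
    _ ≤ C * (((M : ℝ) * A.card) ^ (7 / 8 : ℝ) * ((A.card : ℝ) ^ 2 * H) ^ (1 / 8 : ℝ)) := by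
        gcongr
        conv_rhs => rw [← Real.rpow_one C]
        exact Real.rpow_le_rpow_of_exponent_le hC (by norm_num)
    _ = _ := by ring

lemma scale_sum : ∃ C : ℝ, 1 ≤ C ∧ ∀ (N Q H i : ℕ) (A : Finset ℕ), A ⊆ range (4 * N ^ 2) →
    Q ^ 8 ≤ 2 * H → H ≤ N ^ 2 → 1 ≤ H → N ^ 2 ≤ 2 * 2 ^ i * H →
    ((H : ℝ) ^ 2)⁻¹ * ∑ q ∈ Finset.Icc 1 Q, (q : ℝ) ^ (-(17 / 16) : ℝ) *
      ∑ r ∈ A, ∑ s ∈ A, ∑ a ∈ range q,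
        Fej H (2 * (((r : ℝ) - s) / ((4 * N ^ 2 : ℕ) : ℝ)) - a / q) ≤
      C * ((2 : ℝ) ^ i) ^ (7 / 8 : ℝ) * (A.card : ℝ) ^ (9 / 8 : ℝ) := by
  obtain ⟨C, hC, hh⟩ := holder8
  refine ⟨8 * C, by linarith, fun N Q H i A hA hQ hH hH1 hi => ?_⟩
  have hHr : (0 : ℝ) < H := by exact_mod_cast hH1
  set R : ℝ := (A.card : ℝ) with hR
  have hR0 : 0 ≤ R := by positivity
  set M := 4 * N ^ 2 with hM
  have e1 : ∑ q ∈ Finset.Icc 1 Q, (q : ℝ) ^ (-(17 / 16) : ℝ) *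
      ∑ r ∈ A, ∑ s ∈ A, ∑ a ∈ range q, Fej H (2 * (((r : ℝ) - s) / (M : ℝ)) - a / q) =
      ∑ l ∈ range H, ∑ k ∈ range H, ww Q ((k : ℤ) - l) * ‖hatA M A (2 * ((k : ℤ) - l))‖ ^ 2 := by
    have : ∀ q ∈ Finset.Icc 1 Q, (q : ℝ) ^ (-(17 / 16) : ℝ) *
      ∑ r ∈ A, ∑ s ∈ A, ∑ a ∈ range q, Fej H (2 * (((r : ℝ) - s) / (M : ℝ)) - a / q) =
      ∑ l ∈ range H, ∑ k ∈ range H, (if (q : ℤ) ∣ (k : ℤ) - l then (q : ℝ) ^ (-(1 / 16) : ℝ) else 0) *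
        ‖hatA M A (2 * ((k : ℤ) - l))‖ ^ 2 := by
      intro q hq
      have hq1 := (Finset.mem_Icc.1 hq).1
      have hqr : (0 : ℝ) < q := by exact_mod_cast hq1
      rw [Fej_sum M q H hq1 A, mul_sum]
      apply sum_congr rfl; intro l _
      rw [mul_sum]
      apply sum_congr rfl; intro k _
      rw [← mul_assoc]; congr 1
      split_ifs
      · rw [show (-(1 / 16) : ℝ) = -(17 / 16) + 1 by norm_num, Real.rpow_add hqr, Real.rpow_one]
      · simp
    rw [sum_congr rfl this, sum_comm]
    apply sum_congr rfl; intro l _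
    rw [sum_comm]
    apply sum_congr rfl; intro k _
    unfold ww
    rw [sum_mul]
  rw [e1]
  have h1 := sum_le_sum (fun l (hl : l ∈ range H) => hh N Q H l A hA hQ hH (mem_range.1 hl))
  rw [sum_const, card_range, nsmul_eq_mul] at h1
  have hMH : (M : ℝ) ≤ 8 * 2 ^ i * H := by
    have : M ≤ 8 * 2 ^ i * H := by rw [hM]; linarith
    exact_mod_cast this
  have h2 : ((M : ℝ) * R) ^ (7 / 8 : ℝ) ≤ 8 * ((2 : ℝ) ^ i) ^ (7 / 8 : ℝ) * (H : ℝ) ^ (7 / 8 : ℝ) * R ^ (7 / 8 : ℝ) := by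
    calc ((M : ℝ) * R) ^ (7 / 8 : ℝ) ≤ ((8 * 2 ^ i * H) * R) ^ (7 / 8 : ℝ) := by gcongr
      _ = 8 ^ (7 / 8 : ℝ) * ((2 : ℝ) ^ i) ^ (7 / 8 : ℝ) * (H : ℝ) ^ (7 / 8 : ℝ) * R ^ (7 / 8 : ℝ) := by
        rw [Real.mul_rpow (by positivity) hR0, Real.mul_rpow (by positivity) hHr.le,
          Real.mul_rpow (by norm_num) (by positivity)]
      _ ≤ _ := by
        gcongr
        calc (8 : ℝ) ^ (7 / 8 : ℝ) ≤ 8 ^ (1 : ℝ) :=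
              Real.rpow_le_rpow_of_exponent_le (by norm_num) (by norm_num)
          _ = 8 := Real.rpow_one _
  have h3 : (R ^ 2 * H) ^ (1 / 8 : ℝ) = R ^ (1 / 4 : ℝ) * (H : ℝ) ^ (1 / 8 : ℝ) := by
    rw [Real.mul_rpow (by positivity) hHr.le, ← Real.rpow_natCast, ← Real.rpow_mul hR0]; norm_num
  have h4 : (H : ℝ) ^ (7 / 8 : ℝ) * (H : ℝ) ^ (1 / 8 : ℝ) = H := by
    rw [← Real.rpow_add hHr]; norm_num
  have h5 : R ^ (7 / 8 : ℝ) * R ^ (1 / 4 : ℝ) = R ^ (9 / 8 : ℝ) := by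
    rw [← Real.rpow_add_of_nonneg hR0 (by norm_num) (by norm_num)]; norm_num
  rw [inv_mul_le_iff₀ (by positivity)]
  refine h1.trans ?_
  rw [h3]
  calc (H : ℝ) * (C * ((M : ℝ) * R) ^ (7 / 8 : ℝ) * (R ^ (1 / 4 : ℝ) * (H : ℝ) ^ (1 / 8 : ℝ)))
      ≤ (H : ℝ) * (C * (8 * ((2 : ℝ) ^ i) ^ (7 / 8 : ℝ) * (H : ℝ) ^ (7 / 8 : ℝ) * R ^ (7 / 8 : ℝ)) * (R ^ (1 / 4 : ℝ) * (H : ℝ) ^ (1 / 8 : ℝ))) := by gcongr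
    _ = H * ((H : ℝ) ^ (7 / 8 : ℝ) * (H : ℝ) ^ (1 / 8 : ℝ)) * (8 * C * ((2 : ℝ) ^ i) ^ (7 / 8 : ℝ) * (R ^ (7 / 8 : ℝ) * R ^ (1 / 4 : ℝ))) := by ring
    _ = _ := by rw [h4, h5]; ring

lemma my_add_rpow {p a b : ℝ} (ha : 0 ≤ a) (hb : 0 ≤ b) (hp : 1 ≤ p) :
    (a + b) ^ p ≤ 2 ^ (p - 1) * (a ^ p + b ^ p) := by
  lift a to NNReal using ha
  lift b to NNReal using hb
  exact_mod_cast NNReal.rpow_add_le_mul_rpow_add_rpow a b hp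

/-- Cutoff for denominators. -/
def Qn (N : ℕ) : ℕ := ⌊(N : ℝ) ^ (1 / 8 : ℝ)⌋₊

/-- Scale. -/
def Hn (N i : ℕ) : ℕ := N ^ 2 / 2 ^ i

lemma Qn_pow (N : ℕ) : (Qn N) ^ 8 ≤ N := by
  have h : (Qn N : ℝ) ≤ (N : ℝ) ^ (1 / 8 : ℝ) := Nat.floor_le (by positivity)
  have h2 : (Qn N : ℝ) ^ 8 ≤ ((N : ℝ) ^ (1 / 8 : ℝ)) ^ 8 := by gcongr
  rw [← Real.rpow_natCast, ← Real.rpow_natCast, ← Real.rpow_mul (by positivity)] at h2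
  norm_num at h2
  exact_mod_cast h2

lemma Qn_lt (N k : ℕ) (h : Qn N < k) : (N : ℝ) ^ (1 / 8 : ℝ) ≤ k :=
  (Nat.lt_of_floor_lt h).le

lemma Qn_le (N : ℕ) : Qn N ≤ N :=
  (Nat.le_self_pow (by norm_num) _).trans (Qn_pow N)

lemma Hn_props (N i : ℕ) (hi : 2 ^ i ≤ Qn N) :
    1 ≤ Hn N i ∧ Hn N i ≤ N ^ 2 ∧ N ^ 2 ≤ 2 * 2 ^ i * Hn N i ∧ (Qn N) ^ 8 ≤ 2 * Hn N i ∧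
      2 ^ i * Hn N i ≤ N ^ 2 := by
  have h1 : 2 ^ i ≤ N := hi.trans (Qn_le N)
  have h2 : 2 ^ i * N ≤ N ^ 2 := by nlinarith
  have hp : 0 < 2 ^ i := by positivity
  have h3 : N ≤ Hn N i := by
    unfold Hn; rw [Nat.le_div_iff_mul_le hp]; linarith
  have h4 : N ^ 2 < 2 ^ i * Hn N i + 2 ^ i := by
    unfold Hn
    have := Nat.div_add_mod (N ^ 2) (2 ^ i)
    have := Nat.mod_lt (N ^ 2) hp
    omega
  have h5 := Qn_pow N
  refine ⟨by omega, Nat.div_le_self _ _, ?_, by omega, Nat.mul_div_le _ _⟩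
  have : 2 ^ i * 1 ≤ 2 ^ i * Hn N i := Nat.mul_le_mul_left _ (by omega)
  nlinarith

lemma weyl_alt (N : ℕ) (hN : 1 ≤ N) (θ : ℝ) :
    ‖KK N θ‖ ^ 2 ≤ 11000 * (N : ℝ) ^ (121 / 64 : ℝ) ∨
    ∃ (a : ℤ) (q i : ℕ), 1 ≤ q ∧ q ≤ Qn N ∧ 2 ^ i ≤ Qn N ∧
      8 * (N : ℝ) ^ 2 * |2 * θ - a / q| ≤ 2 ^ i ∧
      ‖KK N θ‖ ^ 2 ≤ 11000 * ((N : ℝ) ^ (121 / 64 : ℝ) +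
        (N : ℝ) ^ 2 * (q : ℝ)⁻¹ * ((2 : ℝ) ^ i) ^ (-(7 / 8) : ℝ)) := by
  obtain ⟨a, q, hq, hw1, hw2⟩ := weyl N hN θ
  have hN1 : (1 : ℝ) ≤ N := by exact_mod_cast hN
  have hN0 : (0 : ℝ) < N := by linarith
  have hq1 : (1 : ℝ) ≤ q := by exact_mod_cast hq
  have hsm : (N : ℝ) ^ (9 / 8 : ℝ) ≤ (N : ℝ) ^ (121 / 64 : ℝ) :=
    Real.rpow_le_rpow_of_exponent_le hN1 (by norm_num)
  have hpos : 0 < (N : ℝ) ^ (121 / 64 : ℝ) := by positivity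
  set β : ℝ := 2 * θ - a / q with hβ
  by_cases hqQ : q ≤ Qn N
  swap
  · left
    push Not at hqQ
    have h1 := Qn_lt N q hqQ
    have h2 : (N : ℝ) ^ 2 / q ≤ (N : ℝ) ^ (121 / 64 : ℝ) := by
      rw [div_le_iff₀ (by linarith)]
      calc (N : ℝ) ^ 2 = (N : ℝ) ^ (15 / 8 : ℝ) * (N : ℝ) ^ (1 / 8 : ℝ) := by
            rw [← Real.rpow_add hN0, ← Real.rpow_natCast]; norm_num
        _ ≤ (N : ℝ) ^ (121 / 64 : ℝ) * q := by
            have := Real.rpow_le_rpow_of_exponent_le hN1 (by norm_num : (15 / 8 : ℝ) ≤ 121 / 64)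
            gcongr ?_ * ?_
    linarith
  -- choose the scale
  have hex : ∃ i : ℕ, 8 * (N : ℝ) ^ 2 * |β| ≤ 2 ^ i := by
    obtain ⟨i, hi⟩ := pow_unbounded_of_one_lt (8 * (N : ℝ) ^ 2 * |β|) (by norm_num : (1 : ℝ) < 2)
    exact ⟨i, hi.le⟩
  classical
  set i := Nat.find hex with hi
  have hi1 : 8 * (N : ℝ) ^ 2 * |β| ≤ 2 ^ i := Nat.find_spec hex
  have key : ‖KK N θ‖ ^ 2 ≤ 643 * ((N : ℝ) ^ (9 / 8 : ℝ) +
      16 * ((N : ℝ) ^ 2 * (q : ℝ)⁻¹ * ((2 : ℝ) ^ i) ^ (-(7 / 8) : ℝ))) := by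
    by_cases h0 : i = 0
    · rw [h0]
      refine hw1.trans ?_
      have : 0 ≤ (N : ℝ) ^ 2 * (q : ℝ)⁻¹ := by positivity
      simp only [pow_zero, Real.one_rpow, mul_one]
      have e : (N : ℝ) ^ 2 / q = (N : ℝ) ^ 2 * (q : ℝ)⁻¹ := div_eq_mul_inv _ _
      rw [e]
      linarith
    · have hlt : ¬ (8 * (N : ℝ) ^ 2 * |β| ≤ 2 ^ (i - 1)) := Nat.find_min hex (by omega)
      push Not at hlt
      have e : (2 : ℝ) ^ i = 2 * 2 ^ (i - 1) := by
        rw [← pow_succ']; congr 1; omega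
      have h1 : (2 : ℝ) ^ i / 16 ≤ (N : ℝ) ^ 2 * |β| := by rw [e]; linarith
      have hb : β ≠ 0 := by
        intro hb
        rw [hb, abs_zero, mul_zero] at hlt
        have : (0 : ℝ) < 2 ^ (i - 1) := by positivity
        linarith
      refine (hw2 hb).trans ?_
      have h2 : ((N : ℝ) ^ 2 * |β|) ^ (-(7 / 8) : ℝ) ≤ 16 * ((2 : ℝ) ^ i) ^ (-(7 / 8) : ℝ) := by
        calc ((N : ℝ) ^ 2 * |β|) ^ (-(7 / 8) : ℝ) ≤ ((2 : ℝ) ^ i / 16) ^ (-(7 / 8) : ℝ) :=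
              Real.rpow_le_rpow_of_nonpos (by positivity) h1 (by norm_num)
          _ = 16 ^ (7 / 8 : ℝ) * ((2 : ℝ) ^ i) ^ (-(7 / 8) : ℝ) := by
              rw [Real.div_rpow (by positivity) (by norm_num), Real.rpow_neg (by norm_num : (0 : ℝ) ≤ 16)]
              field_simp
          _ ≤ 16 * ((2 : ℝ) ^ i) ^ (-(7 / 8) : ℝ) := by
              gcongr
              calc (16 : ℝ) ^ (7 / 8 : ℝ) ≤ 16 ^ (1 : ℝ) :=
                    Real.rpow_le_rpow_of_exponent_le (by norm_num) (by norm_num)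
                _ = 16 := Real.rpow_one _
      have h3 : (N : ℝ) ^ 2 / q * ((N : ℝ) ^ 2 * |β|) ^ (-(7 / 8) : ℝ) ≤
          (N : ℝ) ^ 2 / q * (16 * ((2 : ℝ) ^ i) ^ (-(7 / 8) : ℝ)) := by gcongr
      have h4 : (N : ℝ) ^ 2 / q * (16 * ((2 : ℝ) ^ i) ^ (-(7 / 8) : ℝ)) =
        16 * ((N : ℝ) ^ 2 * (q : ℝ)⁻¹ * ((2 : ℝ) ^ i) ^ (-(7 / 8) : ℝ)) := by
          rw [div_eq_mul_inv]; ring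
      linarith
  have hY : 0 ≤ (N : ℝ) ^ 2 * (q : ℝ)⁻¹ * ((2 : ℝ) ^ i) ^ (-(7 / 8) : ℝ) := by positivity
  by_cases hiQ : 2 ^ i ≤ Qn N
  · right
    exact ⟨a, q, i, hq, hqQ, hiQ, hi1, by linarith⟩
  · left
    push Not at hiQ
    have h1 := Qn_lt N _ hiQ
    push_cast at h1
    have h2 : (N : ℝ) ^ 2 * (q : ℝ)⁻¹ * ((2 : ℝ) ^ i) ^ (-(7 / 8) : ℝ) ≤ (N : ℝ) ^ (121 / 64 : ℝ) := by
      calc (N : ℝ) ^ 2 * (q : ℝ)⁻¹ * ((2 : ℝ) ^ i) ^ (-(7 / 8) : ℝ) ≤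
          (N : ℝ) ^ 2 * 1 * ((N : ℝ) ^ (1 / 8 : ℝ)) ^ (-(7 / 8) : ℝ) := by
            gcongr ?_ * ?_ * ?_
            · exact inv_le_one_of_one_le₀ hq1
            · exact Real.rpow_le_rpow_of_nonpos (by positivity) h1 (by norm_num)
        _ = _ := by
            rw [mul_one, ← Real.rpow_mul hN0.le, ← Real.rpow_natCast, ← Real.rpow_add hN0]
            norm_num
    linarith

/-- The index set of scales. -/
def Sc (N : ℕ) : Finset ℕ := (range (Qn N + 1)).filter (fun i => 2 ^ i ≤ Qn N)

lemma mem_Sc (N i : ℕ) : i ∈ Sc N ↔ 2 ^ i ≤ Qn N := by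
  unfold Sc
  rw [mem_filter, mem_range]
  refine ⟨fun h => h.2, fun h => ⟨?_, h⟩⟩
  have : i < 2 ^ i := Nat.lt_two_pow_self
  omega

lemma majorant : ∃ C : ℝ, 1 ≤ C ∧ ∀ N : ℕ, 1 ≤ N → ∀ θ : ℝ,
    (‖KK N θ‖ ^ 2) ^ (17 / 16 : ℝ) ≤ C * (N : ℝ) ^ (17 / 8 : ℝ) * ((N : ℝ) ^ (-(119 / 1024) : ℝ) +
      ∑ i ∈ Sc N, ((2 : ℝ) ^ i) ^ (-(119 / 128) : ℝ) * (((Hn N i : ℝ) ^ 2)⁻¹ *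
        ∑ q ∈ Finset.Icc 1 (Qn N), (q : ℝ) ^ (-(17 / 16) : ℝ) *
          ∑ a ∈ range q, Fej (Hn N i) (2 * θ - a / q))) := by
  have hp2 : (1 : ℝ) ≤ 2 ^ ((17 / 16 : ℝ) - 1) := Real.one_le_rpow (by norm_num) (by norm_num)
  have hp1 : (1 : ℝ) ≤ 11000 ^ (17 / 16 : ℝ) := Real.one_le_rpow (by norm_num) (by norm_num)
  refine ⟨4 * (11000 ^ (17 / 16 : ℝ) * 2 ^ ((17 / 16 : ℝ) - 1)), by nlinarith, fun N hN θ => ?_⟩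
  have hN1 : (1 : ℝ) ≤ N := by exact_mod_cast hN
  have hN0 : (0 : ℝ) < N := by linarith
  set T : ℕ → ℕ → ℕ → ℝ := fun i q a => Fej (Hn N i) (2 * θ - a / q) with hT
  have hT0 : ∀ i q a, 0 ≤ T i q a := fun i q a => Fej_nonneg _ _
  set E : ℝ := ∑ i ∈ Sc N, ((2 : ℝ) ^ i) ^ (-(119 / 128) : ℝ) * (((Hn N i : ℝ) ^ 2)⁻¹ *
        ∑ q ∈ Finset.Icc 1 (Qn N), (q : ℝ) ^ (-(17 / 16) : ℝ) * ∑ a ∈ range q, T i q a) with hE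
  have hterm0 : ∀ i, 0 ≤ ((2 : ℝ) ^ i) ^ (-(119 / 128) : ℝ) * (((Hn N i : ℝ) ^ 2)⁻¹ *
        ∑ q ∈ Finset.Icc 1 (Qn N), (q : ℝ) ^ (-(17 / 16) : ℝ) * ∑ a ∈ range q, T i q a) := by
    intro i
    have : 0 ≤ ∑ q ∈ Finset.Icc 1 (Qn N), (q : ℝ) ^ (-(17 / 16) : ℝ) * ∑ a ∈ range q, T i q a :=
      sum_nonneg fun q _ => mul_nonneg (by positivity) (sum_nonneg fun a _ => hT0 i q a)
    positivity
  have hE0 : 0 ≤ E := sum_nonneg fun i _ => hterm0 i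
  have eN : ((N : ℝ) ^ (121 / 64 : ℝ)) ^ (17 / 16 : ℝ) =
      (N : ℝ) ^ (17 / 8 : ℝ) * (N : ℝ) ^ (-(119 / 1024) : ℝ) := by
    rw [← Real.rpow_mul hN0.le, ← Real.rpow_add hN0]; norm_num
  -- it suffices to bound the two terms
  suffices h : ∃ Y : ℝ, 0 ≤ Y ∧ ‖KK N θ‖ ^ 2 ≤ 11000 * ((N : ℝ) ^ (121 / 64 : ℝ) + Y) ∧
      Y ^ (17 / 16 : ℝ) ≤ 4 * ((N : ℝ) ^ (17 / 8 : ℝ) * E) by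
    obtain ⟨Y, hY0, hK, hY⟩ := h
    calc (‖KK N θ‖ ^ 2) ^ (17 / 16 : ℝ)
        ≤ (11000 * ((N : ℝ) ^ (121 / 64 : ℝ) + Y)) ^ (17 / 16 : ℝ) := by gcongr
      _ = 11000 ^ (17 / 16 : ℝ) * ((N : ℝ) ^ (121 / 64 : ℝ) + Y) ^ (17 / 16 : ℝ) := by
          rw [Real.mul_rpow (by norm_num) (by positivity)]
      _ ≤ 11000 ^ (17 / 16 : ℝ) * (2 ^ ((17 / 16 : ℝ) - 1) *
            (((N : ℝ) ^ (121 / 64 : ℝ)) ^ (17 / 16 : ℝ) + Y ^ (17 / 16 : ℝ))) := by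
          gcongr
          exact my_add_rpow (by positivity) hY0 (by norm_num)
      _ ≤ 11000 ^ (17 / 16 : ℝ) * (2 ^ ((17 / 16 : ℝ) - 1) *
            (4 * ((N : ℝ) ^ (17 / 8 : ℝ) * (N : ℝ) ^ (-(119 / 1024) : ℝ)) +
              4 * ((N : ℝ) ^ (17 / 8 : ℝ) * E))) := by
          rw [eN]
          have : 0 ≤ (N : ℝ) ^ (17 / 8 : ℝ) * (N : ℝ) ^ (-(119 / 1024) : ℝ) := by positivity
          gcongr ?_ * (?_ * ?_)
          linarith
      _ = _ := by ring
  rcases weyl_alt N hN θ with h | ⟨a, q, i, hq, hqQ, hiQ, hb, hK⟩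
  · refine ⟨0, le_rfl, by simpa using h, ?_⟩
    rw [Real.zero_rpow (by norm_num)]; positivity
  · have hq0 : (0 : ℝ) < q := by exact_mod_cast hq
    refine ⟨_, by positivity, hK, ?_⟩
    obtain ⟨hH1, hH2, hH3, hH4, hH5⟩ := Hn_props N i hiQ
    have hHr : (0 : ℝ) < Hn N i := by exact_mod_cast hH1
    have e1 : ((N : ℝ) ^ 2 * (q : ℝ)⁻¹ * ((2 : ℝ) ^ i) ^ (-(7 / 8) : ℝ)) ^ (17 / 16 : ℝ) =
        (N : ℝ) ^ (17 / 8 : ℝ) * ((q : ℝ) ^ (-(17 / 16) : ℝ) * ((2 : ℝ) ^ i) ^ (-(119 / 128) : ℝ)) := by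
      rw [Real.mul_rpow (by positivity) (by positivity), Real.mul_rpow (by positivity) (by positivity),
        ← Real.rpow_mul (by positivity : (0 : ℝ) ≤ 2 ^ i), Real.inv_rpow hq0.le,
        ← Real.rpow_neg hq0.le, ← Real.rpow_natCast (N : ℝ) 2, ← Real.rpow_mul hN0.le]
      norm_num
      ring
    rw [e1]
    set a' : ℕ := (a % (q : ℤ)).toNat with ha'
    have hqz : (0 : ℤ) < q := by exact_mod_cast hq
    have ha0 : (a' : ℤ) = a % q := Int.toNat_of_nonneg (Int.emod_nonneg _ hqz.ne')
    have halt : a' < q := by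
      have := Int.emod_lt_of_pos a hqz
      omega
    have hrepr : 2 * θ - (a' : ℝ) / q = (2 * θ - a / q) + ((a / (q : ℤ) : ℤ) : ℝ) := by
      have h1 : (a : ℝ) = q * ((a / (q : ℤ) : ℤ) : ℝ) + a' := by
        have := Int.mul_ediv_add_emod a q
        rw [← ha0] at this
        exact_mod_cast this.symm
      have h2 : (a : ℝ) / q = ((a / (q : ℤ) : ℤ) : ℝ) + a' / q := by
        rw [h1]; field_simp
      rw [h2]; ring
    have hF : (Hn N i : ℝ) ^ 2 ≤ 4 * T i q a' := by
      simp only [hT]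
      rw [hrepr, Fej_add_int]
      apply Fej_lower
      have h1 : (2 : ℝ) ^ i * Hn N i ≤ (N : ℝ) ^ 2 := by exact_mod_cast hH5
      have h2 : (0 : ℝ) < 2 ^ i := by positivity
      have h3 : (2 : ℝ) ^ i * (8 * Hn N i * |2 * θ - a / q|) ≤ 2 ^ i * 1 := by
        calc (2 : ℝ) ^ i * (8 * Hn N i * |2 * θ - a / q|)
            = 8 * (2 ^ i * Hn N i) * |2 * θ - a / q| := by ring
          _ ≤ 8 * (N : ℝ) ^ 2 * |2 * θ - a / q| := by gcongr
          _ ≤ _ := by linarith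
      exact le_of_mul_le_mul_left h3 h2
    have hone : 1 ≤ 4 * (((Hn N i : ℝ) ^ 2)⁻¹ * T i q a') := by
      have : ((Hn N i : ℝ) ^ 2)⁻¹ * (Hn N i : ℝ) ^ 2 ≤ ((Hn N i : ℝ) ^ 2)⁻¹ * (4 * T i q a') := by gcongr
      rw [inv_mul_cancel₀ (by positivity)] at this
      linarith
    have s1 : T i q a' ≤ ∑ a ∈ range q, T i q a :=
      single_le_sum (f := fun a => T i q a) (fun a _ => hT0 i q a) (mem_range.2 halt)
    have s2 : (q : ℝ) ^ (-(17 / 16) : ℝ) * ∑ a ∈ range q, T i q a ≤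
        ∑ q ∈ Finset.Icc 1 (Qn N), (q : ℝ) ^ (-(17 / 16) : ℝ) * ∑ a ∈ range q, T i q a :=
      single_le_sum (f := fun q : ℕ => (q : ℝ) ^ (-(17 / 16) : ℝ) * ∑ a ∈ range q, T i q a)
        (fun q _ => mul_nonneg (by positivity) (sum_nonneg fun a _ => hT0 i q a))
        (Finset.mem_Icc.2 ⟨hq, hqQ⟩)
    have s3 := single_le_sum (f := fun i : ℕ => ((2 : ℝ) ^ i) ^ (-(119 / 128) : ℝ) * (((Hn N i : ℝ) ^ 2)⁻¹ *
        ∑ q ∈ Finset.Icc 1 (Qn N), (q : ℝ) ^ (-(17 / 16) : ℝ) * ∑ a ∈ range q, T i q a))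
        (s := Sc N) (fun i _ => hterm0 i) ((mem_Sc N i).2 hiQ)
    have s4 : ((q : ℝ) ^ (-(17 / 16) : ℝ) * ((2 : ℝ) ^ i) ^ (-(119 / 128) : ℝ)) ≤ 4 * E := by
      calc ((q : ℝ) ^ (-(17 / 16) : ℝ) * ((2 : ℝ) ^ i) ^ (-(119 / 128) : ℝ)) 
          ≤ ((q : ℝ) ^ (-(17 / 16) : ℝ) * ((2 : ℝ) ^ i) ^ (-(119 / 128) : ℝ)) * (4 * (((Hn N i : ℝ) ^ 2)⁻¹ * T i q a')) :=
            le_mul_of_one_le_right (by positivity) hone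
        _ = 4 * (((2 : ℝ) ^ i) ^ (-(119 / 128) : ℝ) * (((Hn N i : ℝ) ^ 2)⁻¹ * ((q : ℝ) ^ (-(17 / 16) : ℝ) * T i q a'))) := by ring
        _ ≤ 4 * (((2 : ℝ) ^ i) ^ (-(119 / 128) : ℝ) * (((Hn N i : ℝ) ^ 2)⁻¹ *
        ∑ q ∈ Finset.Icc 1 (Qn N), (q : ℝ) ^ (-(17 / 16) : ℝ) * ∑ a ∈ range q, T i q a)) := by
            gcongr
            refine le_trans ?_ s2
            gcongr
        _ ≤ 4 * E := by linarith
    calc _ ≤ (N : ℝ) ^ (17 / 8 : ℝ) * (4 * E) := by gcongr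
      _ = _ := by ring

lemma geom_rpow (c : ℝ) (hc : 0 < c) : ∃ G : ℝ, 1 ≤ G ∧ ∀ I : Finset ℕ,
    ∑ i ∈ I, ((2 : ℝ) ^ i) ^ (-c) ≤ G := by
  have h0 : (0 : ℝ) ≤ 2 ^ (-c) := by positivity
  have h1 : (2 : ℝ) ^ (-c) < 1 := Real.rpow_lt_one_of_one_lt_of_neg (by norm_num) (by linarith)
  have hs := summable_geometric_of_lt_one h0 h1
  refine ⟨(1 - (2 : ℝ) ^ (-c))⁻¹, ?_, fun I => ?_⟩
  · exact (one_le_inv₀ (by linarith)).2 (by linarith)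
  · rw [← tsum_geometric_of_lt_one h0 h1]
    have : ∀ i ∈ I, ((2 : ℝ) ^ i) ^ (-c) = ((2 : ℝ) ^ (-c)) ^ i := by
      intro i _
      rw [← Real.rpow_natCast, ← Real.rpow_natCast, ← Real.rpow_mul (by norm_num),
        ← Real.rpow_mul (by norm_num), mul_comm]
    rw [sum_congr rfl this]
    exact hs.sum_le_tsum I (fun i _ => by positivity)

lemma KK_pairs : ∃ C : ℝ, 1 ≤ C ∧ ∀ (N : ℕ) (A : Finset ℕ), 1 ≤ N → A ⊆ range (4 * N ^ 2) →
    ∑ r ∈ A, ∑ s ∈ A, (‖KK N (((r : ℝ) - s) / ((4 * N ^ 2 : ℕ) : ℝ))‖ ^ 2) ^ (17 / 16 : ℝ) ≤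
      C * (N : ℝ) ^ (17 / 8 : ℝ) * ((N : ℝ) ^ (-(119 / 1024) : ℝ) * (A.card : ℝ) ^ 2 +
        (A.card : ℝ) ^ (9 / 8 : ℝ)) := by
  obtain ⟨C1, hC1, hmaj⟩ := majorant
  obtain ⟨C2, hC2, hsc⟩ := scale_sum
  obtain ⟨G, hG, hgeom⟩ := geom_rpow (7 / 128) (by norm_num)
  have hCG : 1 ≤ C2 * G := by nlinarith
  refine ⟨C1 * (C2 * G), by nlinarith, fun N A hN hA => ?_⟩
  have hN1 : (1 : ℝ) ≤ N := by exact_mod_cast hN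
  have hN0 : (0 : ℝ) < N := by linarith
  set R : ℝ := (A.card : ℝ) with hR
  have hR0 : 0 ≤ R := by positivity
  set M : ℝ := ((4 * N ^ 2 : ℕ) : ℝ) with hM
  set ρ : ℝ := (N : ℝ) ^ (-(119 / 1024) : ℝ) with hρ
  set Z : ℕ → ℝ := fun i => ((Hn N i : ℝ) ^ 2)⁻¹ * ∑ q ∈ Finset.Icc 1 (Qn N),
      (q : ℝ) ^ (-(17 / 16) : ℝ) * ∑ r ∈ A, ∑ s ∈ A, ∑ a ∈ range q,
        Fej (Hn N i) (2 * (((r : ℝ) - s) / M) - a / q) with hZ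
  have e1 : ∑ r ∈ A, ∑ s ∈ A, (ρ +
      ∑ i ∈ Sc N, ((2 : ℝ) ^ i) ^ (-(119 / 128) : ℝ) * (((Hn N i : ℝ) ^ 2)⁻¹ *
        ∑ q ∈ Finset.Icc 1 (Qn N), (q : ℝ) ^ (-(17 / 16) : ℝ) *
          ∑ a ∈ range q, Fej (Hn N i) (2 * (((r : ℝ) - s) / M) - a / q))) =
      ρ * R ^ 2 + ∑ i ∈ Sc N, ((2 : ℝ) ^ i) ^ (-(119 / 128) : ℝ) * Z i := by
    simp only [sum_add_distrib, sum_const, nsmul_eq_mul]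
    congr 1
    · rw [hR]; ring
    · have a1 : ∀ r s : ℕ, ∑ i ∈ Sc N, ((2 : ℝ) ^ i) ^ (-(119 / 128) : ℝ) * (((Hn N i : ℝ) ^ 2)⁻¹ *
        ∑ q ∈ Finset.Icc 1 (Qn N), (q : ℝ) ^ (-(17 / 16) : ℝ) *
          ∑ a ∈ range q, Fej (Hn N i) (2 * (((r : ℝ) - s) / M) - a / q)) =
          ∑ i ∈ Sc N, ∑ q ∈ Finset.Icc 1 (Qn N), ((2 : ℝ) ^ i) ^ (-(119 / 128) : ℝ) *
            ((Hn N i : ℝ) ^ 2)⁻¹ * (q : ℝ) ^ (-(17 / 16) : ℝ) *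
            ∑ a ∈ range q, Fej (Hn N i) (2 * (((r : ℝ) - s) / M) - a / q) := by
        intro r s
        apply sum_congr rfl; intro i _
        rw [mul_sum, mul_sum]
        apply sum_congr rfl; intro q _
        ring
      have a2 : ∀ i : ℕ, ((2 : ℝ) ^ i) ^ (-(119 / 128) : ℝ) * Z i =
          ∑ q ∈ Finset.Icc 1 (Qn N), ∑ r ∈ A, ∑ s ∈ A, ((2 : ℝ) ^ i) ^ (-(119 / 128) : ℝ) *
            ((Hn N i : ℝ) ^ 2)⁻¹ * (q : ℝ) ^ (-(17 / 16) : ℝ) *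
            ∑ a ∈ range q, Fej (Hn N i) (2 * (((r : ℝ) - s) / M) - a / q) := by
        intro i
        simp only [hZ]
        rw [mul_sum, mul_sum]
        apply sum_congr rfl; intro q _
        rw [mul_sum, mul_sum, mul_sum]
        apply sum_congr rfl; intro r _
        rw [mul_sum, mul_sum, mul_sum]
        apply sum_congr rfl; intro s _
        ring
      simp only [a1, a2]
      have b1 : ∀ r ∈ A, ∑ s ∈ A, ∑ i ∈ Sc N, ∑ q ∈ Finset.Icc 1 (Qn N), ((2 : ℝ) ^ i) ^ (-(119 / 128) : ℝ) *
            ((Hn N i : ℝ) ^ 2)⁻¹ * (q : ℝ) ^ (-(17 / 16) : ℝ) *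
            ∑ a ∈ range q, Fej (Hn N i) (2 * (((r : ℝ) - s) / M) - a / q) =
          ∑ i ∈ Sc N, ∑ q ∈ Finset.Icc 1 (Qn N), ∑ s ∈ A, ((2 : ℝ) ^ i) ^ (-(119 / 128) : ℝ) *
            ((Hn N i : ℝ) ^ 2)⁻¹ * (q : ℝ) ^ (-(17 / 16) : ℝ) *
            ∑ a ∈ range q, Fej (Hn N i) (2 * (((r : ℝ) - s) / M) - a / q) := by
        intro r _
        rw [sum_comm]
        apply sum_congr rfl; intro i _
        rw [sum_comm]
      rw [sum_congr rfl b1, sum_comm]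
      apply sum_congr rfl; intro i _
      rw [sum_comm]
  have h1 : ∑ r ∈ A, ∑ s ∈ A, (‖KK N (((r : ℝ) - s) / M)‖ ^ 2) ^ (17 / 16 : ℝ) ≤
      C1 * (N : ℝ) ^ (17 / 8 : ℝ) * (ρ * R ^ 2 + ∑ i ∈ Sc N, ((2 : ℝ) ^ i) ^ (-(119 / 128) : ℝ) * Z i) := by
    rw [← e1, mul_sum]
    apply sum_le_sum; intro r _
    rw [mul_sum]
    apply sum_le_sum; intro s _
    exact hmaj N hN _
  refine h1.trans ?_
  have h2 : ∑ i ∈ Sc N, ((2 : ℝ) ^ i) ^ (-(119 / 128) : ℝ) * Z i ≤ C2 * G * R ^ (9 / 8 : ℝ) := by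
    calc _ ≤ ∑ i ∈ Sc N, C2 * R ^ (9 / 8 : ℝ) * ((2 : ℝ) ^ i) ^ (-(7 / 128) : ℝ) := by
          apply sum_le_sum; intro i hi
          obtain ⟨hH1, hH2, hH3, hH4, hH5⟩ := Hn_props N i ((mem_Sc N i).1 hi)
          have := hsc N (Qn N) (Hn N i) i A hA hH4 hH2 hH1 hH3
          have e : ((2 : ℝ) ^ i) ^ (-(7 / 128) : ℝ) =
              ((2 : ℝ) ^ i) ^ (-(119 / 128) : ℝ) * ((2 : ℝ) ^ i) ^ (7 / 8 : ℝ) := by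
            rw [← Real.rpow_add (by positivity)]; norm_num
          rw [e]
          calc _ ≤ ((2 : ℝ) ^ i) ^ (-(119 / 128) : ℝ) * (C2 * ((2 : ℝ) ^ i) ^ (7 / 8 : ℝ) * R ^ (9 / 8 : ℝ)) := by
                gcongr
            _ = _ := by ring
      _ ≤ C2 * R ^ (9 / 8 : ℝ) * G := by
          rw [← mul_sum]
          have := hgeom (Sc N)
          gcongr
      _ = _ := by ring
  have h3 : ρ * R ^ 2 ≤ C2 * G * (ρ * R ^ 2) := le_mul_of_one_le_left (by positivity) hCG
  calc _ ≤ C1 * (N : ℝ) ^ (17 / 8 : ℝ) * (C2 * G * (ρ * R ^ 2) + C2 * G * R ^ (9 / 8 : ℝ)) := by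
        gcongr
    _ = _ := by ring

lemma duality (N : ℕ) (f : ℤ → ℂ) (A : Finset ℕ) (lam : ℝ) (hl : 0 < lam)
    (hA : ∀ j ∈ A, lam ≤ ‖FF N f j‖) :
    lam ^ 2 * (A.card : ℝ) ^ 2 ≤ (∑ x ∈ Finset.Icc (-(N : ℤ)) N, ‖f x‖ ^ 2) *
      ∑ r ∈ A, ∑ s ∈ A, ‖KK N (((r : ℝ) - s) / ((4 * N ^ 2 : ℕ) : ℝ))‖ := by
  set M : ℝ := ((4 * N ^ 2 : ℕ) : ℝ) with hM
  set S := ∑ x ∈ Finset.Icc (-(N : ℤ)) N, ‖f x‖ ^ 2 with hS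
  have hph : ∀ z : ℂ, ∃ c : ℂ, ‖c‖ ≤ 1 ∧ c * z = (‖z‖ : ℂ) := by
    intro z
    by_cases hz : z = 0
    · exact ⟨0, by simp, by simp [hz]⟩
    · refine ⟨(‖z‖ : ℂ) / z, ?_, div_mul_cancel₀ _ hz⟩
      rw [norm_div, Complex.norm_real, norm_norm, div_self (norm_ne_zero_iff.2 hz)]
  choose ph hph1 hph2 using hph
  set c : ℕ → ℂ := fun j => ph (FF N f j) with hc
  have hc1 : ∀ j, ‖c j‖ ≤ 1 := fun j => hph1 _
  have hc2 : ∀ j, c j * FF N f j = (‖FF N f j‖ : ℂ) := fun j => hph2 _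
  set g : ℤ → ℂ := fun x => ∑ j ∈ A, c j * ee (((x ^ 2 : ℤ) : ℝ) * j / M) with hg
  have h1 : lam * A.card ≤ ∑ j ∈ A, ‖FF N f j‖ := by
    have := sum_le_sum hA
    rw [sum_const, nsmul_eq_mul] at this
    linarith
  have h2 : ((∑ j ∈ A, ‖FF N f j‖ : ℝ) : ℂ) = ∑ x ∈ Finset.Icc (-(N : ℤ)) N, f x * g x := by
    push_cast
    rw [sum_congr rfl (fun j _ => (hc2 j).symm)]
    simp only [FF, hg, mul_sum]
    rw [sum_comm]
    apply sum_congr rfl; intro x _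
    apply sum_congr rfl; intro j _
    ring
  have h3 : ∑ j ∈ A, ‖FF N f j‖ ≤ ∑ x ∈ Finset.Icc (-(N : ℤ)) N, ‖f x‖ * ‖g x‖ := by
    calc ∑ j ∈ A, ‖FF N f j‖ ≤ ‖((∑ j ∈ A, ‖FF N f j‖ : ℝ) : ℂ)‖ := by
          rw [Complex.norm_real]; exact Real.le_norm_self _
      _ ≤ _ := by
          rw [h2]
          refine (norm_sum_le _ _).trans (le_of_eq ?_)
          apply sum_congr rfl; intro x _
          rw [norm_mul]
  have h4 : (∑ x ∈ Finset.Icc (-(N : ℤ)) N, ‖f x‖ * ‖g x‖) ^ 2 ≤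
      S * ∑ x ∈ Finset.Icc (-(N : ℤ)) N, ‖g x‖ ^ 2 := sum_mul_sq_le_sq_mul_sq _ _ _
  have h5 : ((∑ x ∈ Finset.Icc (-(N : ℤ)) N, ‖g x‖ ^ 2 : ℝ) : ℂ) =
      ∑ r ∈ A, ∑ s ∈ A, c r * (starRingEnd ℂ) (c s) * KK N (((r : ℝ) - s) / M) := by
    rw [Complex.ofReal_sum]
    have : ∀ x ∈ Finset.Icc (-(N : ℤ)) N, ((‖g x‖ ^ 2 : ℝ) : ℂ) = ∑ r ∈ A, ∑ s ∈ A,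
        c r * (starRingEnd ℂ) (c s) * ee ((((r : ℝ) - s) / M) * (x : ℝ) ^ 2) := by
      intro x _
      simp only [hg]
      rw [norm_sq_sum_eq]
      apply sum_congr rfl; intro r _
      apply sum_congr rfl; intro s _
      rw [map_mul, ee_conj, show ∀ a b c d : ℂ, a * b * (c * d) = a * c * (b * d) by intros; ring, ← ee_add]
      congr 2
      push_cast; ring
    rw [sum_congr rfl this, sum_comm]
    apply sum_congr rfl; intro r _
    rw [sum_comm]
    apply sum_congr rfl; intro s _
    rw [← mul_sum]; rfl
  have h6 : ∑ x ∈ Finset.Icc (-(N : ℤ)) N, ‖g x‖ ^ 2 ≤ ∑ r ∈ A, ∑ s ∈ A, ‖KK N (((r : ℝ) - s) / M)‖ := by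
    calc _ ≤ ‖((∑ x ∈ Finset.Icc (-(N : ℤ)) N, ‖g x‖ ^ 2 : ℝ) : ℂ)‖ := by
          rw [Complex.norm_real]; exact Real.le_norm_self _
      _ ≤ _ := by
          rw [h5]
          refine (norm_sum_le _ _).trans (sum_le_sum fun r _ => ?_)
          refine (norm_sum_le _ _).trans (sum_le_sum fun s _ => ?_)
          rw [norm_mul, norm_mul, RCLike.norm_conj]
          have : ‖c r‖ * ‖c s‖ ≤ 1 := mul_le_one₀ (hc1 r) (norm_nonneg _) (hc1 s)
          exact mul_le_of_le_one_left (norm_nonneg _) this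
  have hS0 : 0 ≤ S := sum_nonneg fun _ _ => by positivity
  calc lam ^ 2 * (A.card : ℝ) ^ 2 = (lam * A.card) ^ 2 := by ring
    _ ≤ (∑ x ∈ Finset.Icc (-(N : ℤ)) N, ‖f x‖ * ‖g x‖) ^ 2 := by
        have := h1.trans h3
        gcongr
    _ ≤ _ := h4
    _ ≤ _ := by gcongr

lemma level_raw : ∃ C : ℝ, 1 ≤ C ∧ ∀ (N : ℕ) (f : ℤ → ℂ) (A : Finset ℕ) (lam : ℝ), 1 ≤ N →
    A ⊆ range (4 * N ^ 2) → 0 < lam → (∀ j ∈ A, lam ≤ ‖FF N f j‖) →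
    (A.card : ℝ) ^ 2 ≤ C * (N * (∑ x ∈ Finset.Icc (-(N : ℤ)) N, ‖f x‖ ^ 2) / lam ^ 2) ^ (17 / 8 : ℝ) *
      ((N : ℝ) ^ (-(119 / 1024) : ℝ) * (A.card : ℝ) ^ 2 + (A.card : ℝ) ^ (9 / 8 : ℝ)) := by
  obtain ⟨C, hC, hK⟩ := KK_pairs
  refine ⟨C, hC, fun N f A lam hN hA hl hf => ?_⟩
  have hN1 : (1 : ℝ) ≤ N := by exact_mod_cast hN
  have hN0 : (0 : ℝ) < N := by linarith
  have hd := duality N f A lam hl hf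
  set M : ℝ := ((4 * N ^ 2 : ℕ) : ℝ) with hM
  set S := ∑ x ∈ Finset.Icc (-(N : ℤ)) N, ‖f x‖ ^ 2 with hS
  have hS0 : 0 ≤ S := sum_nonneg fun _ _ => by positivity
  rcases Nat.eq_zero_or_pos A.card with h0 | h0
  · rw [h0]; simp
  have hR0 : (0 : ℝ) < A.card := by exact_mod_cast h0
  set R : ℝ := (A.card : ℝ) with hR
  have hk := hK N A hN hA
  have hpm := Real.rpow_sum_le_const_mul_sum_rpow_of_nonneg (A ×ˢ A)
    (f := fun p : ℕ × ℕ => ‖KK N (((p.1 : ℝ) - p.2) / M)‖) (p := 17 / 8) (by norm_num)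
    (fun p _ => norm_nonneg _)
  rw [sum_product, sum_product, card_product] at hpm
  have e1 : ∀ z : ℂ, ‖z‖ ^ (17 / 8 : ℝ) = (‖z‖ ^ 2) ^ (17 / 16 : ℝ) := by
    intro z
    rw [← Real.rpow_natCast, ← Real.rpow_mul (norm_nonneg _)]; norm_num
  simp only [e1] at hpm
  set W1 := ∑ r ∈ A, ∑ s ∈ A, ‖KK N (((r : ℝ) - s) / M)‖ with hW1
  set W2 := ∑ r ∈ A, ∑ s ∈ A, (‖KK N (((r : ℝ) - s) / M)‖ ^ 2) ^ (17 / 16 : ℝ) with hW2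
  have hW0 : 0 ≤ W1 := sum_nonneg fun _ _ => sum_nonneg fun _ _ => norm_nonneg _
  have hcard : ((A.card * A.card : ℕ) : ℝ) = R ^ 2 := by push_cast; rw [hR]; ring
  rw [hcard, show (17 / 8 - 1 : ℝ) = 9 / 8 by norm_num] at hpm
  have h1 : (lam ^ 2 * R ^ 2) ^ (17 / 8 : ℝ) ≤ (S * W1) ^ (17 / 8 : ℝ) := by gcongr
  rw [Real.mul_rpow (by positivity) (by positivity), Real.mul_rpow hS0 hW0] at h1
  have e2 : (R ^ 2) ^ (17 / 8 : ℝ) = (R ^ 2) ^ (9 / 8 : ℝ) * R ^ 2 := by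
    rw [show (17 / 8 : ℝ) = 9 / 8 + 1 by norm_num, Real.rpow_add (by positivity), Real.rpow_one]
  have hp : 0 < (R ^ 2) ^ (9 / 8 : ℝ) := by positivity
  have h2 : (lam ^ 2) ^ (17 / 8 : ℝ) * R ^ 2 ≤ S ^ (17 / 8 : ℝ) * W2 := by
    have : (R ^ 2) ^ (9 / 8 : ℝ) * ((lam ^ 2) ^ (17 / 8 : ℝ) * R ^ 2) ≤ (R ^ 2) ^ (9 / 8 : ℝ) * (S ^ (17 / 8 : ℝ) * W2) := by
      calc _ = (lam ^ 2) ^ (17 / 8 : ℝ) * ((R ^ 2) ^ (9 / 8 : ℝ) * R ^ 2) := by ring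
        _ = (lam ^ 2) ^ (17 / 8 : ℝ) * (R ^ 2) ^ (17 / 8 : ℝ) := by rw [e2]
        _ ≤ S ^ (17 / 8 : ℝ) * W1 ^ (17 / 8 : ℝ) := h1
        _ ≤ S ^ (17 / 8 : ℝ) * ((R ^ 2) ^ (9 / 8 : ℝ) * W2) := by gcongr
        _ = _ := by ring
    exact le_of_mul_le_mul_left this hp
  have hL : 0 < (lam ^ 2) ^ (17 / 8 : ℝ) := by positivity
  rw [Real.div_rpow (by positivity) (by positivity), Real.mul_rpow hN0.le hS0]
  have h3 : R ^ 2 ≤ S ^ (17 / 8 : ℝ) * W2 / (lam ^ 2) ^ (17 / 8 : ℝ) := by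
    rw [le_div_iff₀ hL]; linarith
  refine h3.trans ?_
  calc _ ≤ S ^ (17 / 8 : ℝ) * (C * (N : ℝ) ^ (17 / 8 : ℝ) * ((N : ℝ) ^ (-(119 / 1024) : ℝ) * R ^ 2 +
        R ^ (9 / 8 : ℝ))) / (lam ^ 2) ^ (17 / 8 : ℝ) := by gcongr
    _ = _ := by ring

lemma level : ∃ C : ℝ, 1 ≤ C ∧ ∀ (N : ℕ) (f : ℤ → ℂ) (A : Finset ℕ) (lam : ℝ), 1 ≤ N →
    A ⊆ range (4 * N ^ 2) → 0 < lam → (∀ j ∈ A, lam ≤ ‖FF N f j‖) →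
    N * (∑ x ∈ Finset.Icc (-(N : ℤ)) N, ‖f x‖ ^ 2) / lam ^ 2 ≤ C⁻¹ * (N : ℝ) ^ (7 / 128 : ℝ) →
    (A.card : ℝ) ≤ C * (N * (∑ x ∈ Finset.Icc (-(N : ℤ)) N, ‖f x‖ ^ 2) / lam ^ 2) ^ (17 / 7 : ℝ) := by
  obtain ⟨C1, hC1, hlev⟩ := level_raw
  have hC1' : (1 : ℝ) ≤ (2 * C1) ^ (8 / 7 : ℝ) := Real.one_le_rpow (by linarith) (by norm_num)
  refine ⟨(2 * C1) ^ (8 / 7 : ℝ), hC1', fun N f A lam hN hA hl hf hu => ?_⟩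
  have hN1 : (1 : ℝ) ≤ N := by exact_mod_cast hN
  have hN0 : (0 : ℝ) < N := by linarith
  have h := hlev N f A lam hN hA hl hf
  set S := ∑ x ∈ Finset.Icc (-(N : ℤ)) N, ‖f x‖ ^ 2 with hS
  have hS0 : 0 ≤ S := sum_nonneg fun _ _ => by positivity
  set u := N * S / lam ^ 2 with hu'
  have hu0 : 0 ≤ u := by positivity
  rcases Nat.eq_zero_or_pos A.card with h0 | h0
  · rw [h0]; simp; positivity
  have hR0 : (0 : ℝ) < A.card := by exact_mod_cast h0
  set R : ℝ := (A.card : ℝ) with hR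
  have h1 : C1 * u ^ (17 / 8 : ℝ) * (N : ℝ) ^ (-(119 / 1024) : ℝ) ≤ 1 / 2 := by
    have a1 : u ^ (17 / 8 : ℝ) ≤ (((2 * C1) ^ (8 / 7 : ℝ))⁻¹ * (N : ℝ) ^ (7 / 128 : ℝ)) ^ (17 / 8 : ℝ) := by
      gcongr
    rw [Real.mul_rpow (by positivity) (by positivity), ← Real.rpow_mul hN0.le,
      Real.inv_rpow (by positivity), ← Real.rpow_mul (by linarith)] at a1
    have a2 : 2 * C1 ≤ (2 * C1) ^ (8 / 7 * (17 / 8) : ℝ) := by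
      conv_lhs => rw [← Real.rpow_one (2 * C1)]
      exact Real.rpow_le_rpow_of_exponent_le (by linarith) (by norm_num)
    have a3 : ((2 * C1) ^ (8 / 7 * (17 / 8) : ℝ))⁻¹ ≤ (2 * C1)⁻¹ := by gcongr
    have a4 : (N : ℝ) ^ (7 / 128 * (17 / 8) : ℝ) * (N : ℝ) ^ (-(119 / 1024) : ℝ) = 1 := by
      rw [← Real.rpow_add hN0]; norm_num
    calc _ ≤ C1 * ((2 * C1)⁻¹ * (N : ℝ) ^ (7 / 128 * (17 / 8) : ℝ)) * (N : ℝ) ^ (-(119 / 1024) : ℝ) := by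
          gcongr
          refine a1.trans ?_
          gcongr
      _ = C1 * (2 * C1)⁻¹ * ((N : ℝ) ^ (7 / 128 * (17 / 8) : ℝ) * (N : ℝ) ^ (-(119 / 1024) : ℝ)) := by ring
      _ = 1 / 2 := by rw [a4]; field_simp
  have h2 : R ^ 2 ≤ 2 * C1 * u ^ (17 / 8 : ℝ) * R ^ (9 / 8 : ℝ) := by
    have : C1 * u ^ (17 / 8 : ℝ) * (N : ℝ) ^ (-(119 / 1024) : ℝ) * R ^ 2 ≤ 1 / 2 * R ^ 2 := by gcongr
    linarith
  have h3 : R ^ (7 / 8 : ℝ) ≤ 2 * C1 * u ^ (17 / 8 : ℝ) := by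
    have e : R ^ 2 = R ^ (7 / 8 : ℝ) * R ^ (9 / 8 : ℝ) := by
      rw [← Real.rpow_add hR0, ← Real.rpow_natCast]; norm_num
    rw [e] at h2
    exact le_of_mul_le_mul_right h2 (by positivity)
  calc R = (R ^ (7 / 8 : ℝ)) ^ (8 / 7 : ℝ) := by rw [← Real.rpow_mul hR0.le]; norm_num
    _ ≤ (2 * C1 * u ^ (17 / 8 : ℝ)) ^ (8 / 7 : ℝ) := by gcongr
    _ = _ := by
      rw [Real.mul_rpow (by linarith) (by positivity), ← Real.rpow_mul hu0]; norm_num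

lemma FF_le (N : ℕ) (hN : 1 ≤ N) (f : ℤ → ℂ) (j : ℕ) :
    ‖FF N f j‖ ≤ 2 * Real.sqrt (N * ∑ x ∈ Finset.Icc (-(N : ℤ)) N, ‖f x‖ ^ 2) := by
  have hN1 : (1 : ℝ) ≤ N := by exact_mod_cast hN
  set S := ∑ x ∈ Finset.Icc (-(N : ℤ)) N, ‖f x‖ ^ 2 with hS
  have hS0 : 0 ≤ S := sum_nonneg fun _ _ => by positivity
  have h1 : ‖FF N f j‖ ≤ ∑ x ∈ Finset.Icc (-(N : ℤ)) N, ‖f x‖ := by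
    unfold FF
    refine (norm_sum_le _ _).trans (le_of_eq ?_)
    apply sum_congr rfl; intro x _
    rw [norm_mul, ee_norm, mul_one]
  have h2 := sq_sum_le_card_mul_sum_sq (s := Finset.Icc (-(N : ℤ)) N) (f := fun x => ‖f x‖)
  have h3 : ((Finset.Icc (-(N : ℤ)) N).card : ℝ) = 2 * N + 1 := by
    rw [Int.card_Icc]
    have : ((N : ℤ) + 1 - (-(N : ℤ))).toNat = 2 * N + 1 := by omega
    rw [this]; push_cast; ring
  rw [h3] at h2
  refine h1.trans ?_
  apply le_of_sq_le_sq _ (by positivity)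
  rw [mul_pow, Real.sq_sqrt (by positivity)]
  refine h2.trans ?_
  nlinarith

lemma grid_norm : ∃ C : ℝ, 1 ≤ C ∧ ∀ (N : ℕ) (f : ℤ → ℂ), 1 ≤ N →
    0 < ∑ x ∈ Finset.Icc (-(N : ℤ)) N, ‖f x‖ ^ 2 →
    ∑ j ∈ range (4 * N ^ 2), (‖FF N f j‖ /
      Real.sqrt (N * ∑ x ∈ Finset.Icc (-(N : ℤ)) N, ‖f x‖ ^ 2)) ^ 5 ≤ C := by
  obtain ⟨C0, hC0, hlev⟩ := level
  obtain ⟨C4, hC4, hL4⟩ := L4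
  obtain ⟨G, hG, hgeom⟩ := geom_rpow (1 / 7) (by norm_num)
  refine ⟨32 * C0 * G + 8 * C0 * C4, by nlinarith [mul_nonneg (sub_nonneg.2 hC0) (sub_nonneg.2 hG), mul_nonneg (sub_nonneg.2 hC0) (sub_nonneg.2 hC4)], fun N f hN hSpos => ?_⟩
  have hN1 : (1 : ℝ) ≤ N := by exact_mod_cast hN
  have hN0 : (0 : ℝ) < N := by linarith
  have hF := FF_le N hN f
  have hL := hL4 N hN f
  have hlv := fun A lam => hlev N f A lam hN
  set S := ∑ x ∈ Finset.Icc (-(N : ℤ)) N, ‖f x‖ ^ 2 with hS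
  set D := Real.sqrt (N * S) with hD
  have hD0 : 0 < D := Real.sqrt_pos.2 (by positivity)
  have hD2 : D ^ 2 = N * S := Real.sq_sqrt (by positivity)
  set v : ℕ → ℝ := fun j => ‖FF N f j‖ / D with hv
  have hv0 : ∀ j, 0 ≤ v j := fun j => by positivity
  have hv2 : ∀ j, v j ≤ 2 := fun j => by
    simp only [hv]; rw [div_le_iff₀ hD0]; exact hF j
  set I : Finset ℕ := (range (N + 1)).filter (fun i => (4 : ℝ) ^ i ≤ C0⁻¹ * (N : ℝ) ^ (7 / 128 : ℝ)) with hI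
  have hmem : ∀ i : ℕ, (4 : ℝ) ^ i ≤ C0⁻¹ * (N : ℝ) ^ (7 / 128 : ℝ) → i ∈ I := by
    intro i hi
    rw [hI, mem_filter, mem_range]
    refine ⟨?_, hi⟩
    have h1 : C0⁻¹ * (N : ℝ) ^ (7 / 128 : ℝ) ≤ N := by
      have a1 : C0⁻¹ ≤ 1 := inv_le_one_of_one_le₀ hC0
      have a2 : (N : ℝ) ^ (7 / 128 : ℝ) ≤ (N : ℝ) ^ (1 : ℝ) :=
        Real.rpow_le_rpow_of_exponent_le hN1 (by norm_num)
      rw [Real.rpow_one] at a2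
      calc C0⁻¹ * (N : ℝ) ^ (7 / 128 : ℝ) ≤ 1 * N := by gcongr
        _ = N := one_mul _
    have h2 : 4 ^ i ≤ N := by
      have := hi.trans h1
      exact_mod_cast this
    have h3 : i < 4 ^ i := Nat.lt_pow_self (by norm_num)
    omega
  set B : ℕ → Finset ℕ := fun i => (range (4 * N ^ 2)).filter (fun j => D / 2 ^ i ≤ ‖FF N f j‖) with hB
  have hBcard : ∀ i ∈ I, ((B i).card : ℝ) ≤ C0 * ((4 : ℝ) ^ i) ^ (17 / 7 : ℝ) := by
    intro i hi
    rw [hI, mem_filter] at hi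
    have e : N * S / (D / 2 ^ i) ^ 2 = (4 : ℝ) ^ i := by
      rw [div_pow, hD2, ← pow_mul, mul_comm i 2, pow_mul]
      field_simp
      norm_num
    have := hlv (B i) (D / 2 ^ i) (filter_subset _ _) (by positivity)
      (fun j hj => (mem_filter.1 hj).2) (by rw [e]; exact hi.2)
    rwa [e] at this
  set κ : ℝ := 2 * C0 * (N : ℝ) ^ (-(7 / 256) : ℝ) with hκ
  have hpt : ∀ j ∈ range (4 * N ^ 2), v j ^ 5 ≤
      (∑ i ∈ I, if j ∈ B i then 32 * ((2 : ℝ) ^ i)⁻¹ ^ 5 else 0) + κ * v j ^ 4 := by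
    intro j hj
    have hnn : 0 ≤ ∑ i ∈ I, if j ∈ B i then 32 * ((2 : ℝ) ^ i)⁻¹ ^ 5 else 0 :=
      sum_nonneg fun i _ => by split_ifs <;> positivity
    have hκ0 : 0 ≤ κ := by positivity
    rcases (hv0 j).eq_or_lt with h0 | h0
    · rw [← h0, zero_pow (by norm_num), zero_pow (by norm_num), mul_zero, add_zero]; exact hnn
    have hex : ∃ i : ℕ, ((2 : ℝ) ^ i)⁻¹ ≤ v j := by
      obtain ⟨i, hi⟩ := pow_unbounded_of_one_lt (v j)⁻¹ (by norm_num : (1 : ℝ) < 2)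
      exact ⟨i, inv_le_of_inv_le₀ h0 hi.le⟩
    classical
    set i := Nat.find hex with hi
    have hi1 : ((2 : ℝ) ^ i)⁻¹ ≤ v j := Nat.find_spec hex
    have hi2 : v j ≤ 2 * ((2 : ℝ) ^ i)⁻¹ := by
      by_cases hz : i = 0
      · rw [hz]; simpa using hv2 j
      · have hlt : ¬ (((2 : ℝ) ^ (i - 1))⁻¹ ≤ v j) := Nat.find_min hex (by omega)
        push Not at hlt
        have e : (2 : ℝ) ^ i = 2 * 2 ^ (i - 1) := by
          rw [← pow_succ']; congr 1; omega
        rw [e, mul_inv, ← mul_assoc, mul_inv_cancel₀ (by norm_num), one_mul]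
        exact hlt.le
    by_cases hiI : i ∈ I
    · have hjB : j ∈ B i := by
        rw [hB, mem_filter]
        refine ⟨hj, ?_⟩
        simp only [hv] at hi1
        rw [le_div_iff₀ hD0] at hi1
        rw [div_eq_inv_mul]; exact hi1
      have s1 := single_le_sum (f := fun i => if j ∈ B i then 32 * ((2 : ℝ) ^ i)⁻¹ ^ 5 else 0) (s := I)
        (fun i _ => by split_ifs <;> positivity) hiI
      simp only [if_pos hjB] at s1
      have s2 : v j ^ 5 ≤ (2 * ((2 : ℝ) ^ i)⁻¹) ^ 5 := by gcongr
      have s3 : (2 * ((2 : ℝ) ^ i)⁻¹) ^ 5 = 32 * ((2 : ℝ) ^ i)⁻¹ ^ 5 := by ring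
      have s4 : 0 ≤ κ * v j ^ 4 := by positivity
      linarith
    · have hbig : C0⁻¹ * (N : ℝ) ^ (7 / 128 : ℝ) < (4 : ℝ) ^ i := by
        by_contra hcon
        exact hiI (hmem i (not_lt.1 hcon))
      have hsm : ((2 : ℝ) ^ i)⁻¹ ≤ C0 * (N : ℝ) ^ (-(7 / 256) : ℝ) := by
        rw [inv_le_comm₀ (by positivity) (by positivity), mul_inv, ← Real.rpow_neg hN0.le, neg_neg]
        apply le_of_sq_le_sq _ (by positivity)
        rw [mul_pow, ← pow_mul, mul_comm i 2, pow_mul, ← Real.rpow_natCast ((N : ℝ) ^ (7 / 256 : ℝ)) 2, ← Real.rpow_mul hN0.le]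
        have e : (7 / 256 * ((2 : ℕ) : ℝ)) = (7 / 128 : ℝ) := by norm_num
        rw [e]
        have a1 : C0⁻¹ ^ 2 ≤ C0⁻¹ := by
          have : C0⁻¹ ≤ 1 := inv_le_one_of_one_le₀ hC0
          have : 0 ≤ C0⁻¹ := by positivity
          nlinarith
        calc C0⁻¹ ^ 2 * (N : ℝ) ^ (7 / 128 : ℝ) ≤ C0⁻¹ * (N : ℝ) ^ (7 / 128 : ℝ) := by gcongr
          _ ≤ 4 ^ i := hbig.le
          _ = (2 ^ 2) ^ i := by norm_num
      have hvk : v j ≤ κ := by rw [hκ]; linarith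
      have : v j ^ 5 ≤ κ * v j ^ 4 := by
        rw [pow_succ']; gcongr
      linarith
  refine (sum_le_sum hpt).trans ?_
  rw [sum_add_distrib, sum_comm, ← mul_sum]
  have t1 : ∑ i ∈ I, ∑ j ∈ range (4 * N ^ 2), (if j ∈ B i then 32 * ((2 : ℝ) ^ i)⁻¹ ^ 5 else 0) ≤ 32 * C0 * G := by
    calc _ ≤ ∑ i ∈ I, 32 * C0 * ((2 : ℝ) ^ i) ^ (-(1 / 7) : ℝ) := by
          apply sum_le_sum; intro i hi
          have e : (range (4 * N ^ 2)).filter (fun j => j ∈ B i) = B i := by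
            ext j; simp [hB]
          rw [← sum_filter, e, sum_const, nsmul_eq_mul]
          have e2 : ((4 : ℝ) ^ i) ^ (17 / 7 : ℝ) * ((2 : ℝ) ^ i)⁻¹ ^ 5 = ((2 : ℝ) ^ i) ^ (-(1 / 7) : ℝ) := by
            have p : (0 : ℝ) < 2 ^ i := by positivity
            rw [show (4 : ℝ) ^ i = ((2 : ℝ) ^ i) ^ (2 : ℝ) by
              rw [show (4 : ℝ) = 2 ^ 2 by norm_num, ← pow_mul, mul_comm, pow_mul]
              exact_mod_cast rfl]
            rw [← Real.rpow_mul p.le, ← Real.rpow_natCast (((2 : ℝ) ^ i)⁻¹) 5, Real.inv_rpow p.le,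
              ← Real.rpow_neg p.le, ← Real.rpow_add p]
            norm_num
          calc ((B i).card : ℝ) * (32 * ((2 : ℝ) ^ i)⁻¹ ^ 5)
              ≤ (C0 * ((4 : ℝ) ^ i) ^ (17 / 7 : ℝ)) * (32 * ((2 : ℝ) ^ i)⁻¹ ^ 5) := by
                have := hBcard i hi
                gcongr
            _ = 32 * C0 * (((4 : ℝ) ^ i) ^ (17 / 7 : ℝ) * ((2 : ℝ) ^ i)⁻¹ ^ 5) := by ring
            _ ≤ _ := by rw [e2]
      _ ≤ _ := by
          rw [← mul_sum]
          have := hgeom I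
          gcongr
  have t2 : κ * ∑ j ∈ range (4 * N ^ 2), v j ^ 4 ≤ 8 * C0 * C4 := by
    have a1 : ∑ j ∈ range (4 * N ^ 2), v j ^ 4 ≤ 4 * C4 * (N : ℝ) ^ (1 / 64 : ℝ) := by
      simp only [hv, div_pow]
      rw [← sum_div, div_le_iff₀ (by positivity), show D ^ 4 = (D ^ 2) ^ 2 by ring, hD2]
      refine hL.trans (le_of_eq ?_)
      push_cast; ring
    have a2 : (N : ℝ) ^ (-(7 / 256) : ℝ) * (N : ℝ) ^ (1 / 64 : ℝ) ≤ 1 := by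
      rw [← Real.rpow_add hN0]
      exact Real.rpow_le_one_of_one_le_of_nonpos hN1 (by norm_num)
    calc _ ≤ κ * (4 * C4 * (N : ℝ) ^ (1 / 64 : ℝ)) := by gcongr
      _ = 8 * C0 * C4 * ((N : ℝ) ^ (-(7 / 256) : ℝ) * (N : ℝ) ^ (1 / 64 : ℝ)) := by rw [hκ]; ring
      _ ≤ 8 * C0 * C4 * 1 := by gcongr
      _ = _ := mul_one _
  linarith

lemma grid_n (n : ℕ) (hn : 5 ≤ n) : ∃ C : ℝ, 1 ≤ C ∧ ∀ (N : ℕ) (f : ℤ → ℂ), 1 ≤ N →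
    ∑ j ∈ range (4 * N ^ 2), ‖FF N f j‖ ^ n ≤
      C * (Real.sqrt (N * ∑ x ∈ Finset.Icc (-(N : ℤ)) N, ‖f x‖ ^ 2)) ^ n := by
  obtain ⟨C, hC, h⟩ := grid_norm
  have h2 : (1 : ℝ) ≤ 2 ^ (n - 5) := one_le_pow₀ (by norm_num)
  refine ⟨2 ^ (n - 5) * C, by nlinarith, fun N f hN => ?_⟩
  have hF := FF_le N hN f
  have hg := h N f hN
  have hN1 : (1 : ℝ) ≤ N := by exact_mod_cast hN
  set S := ∑ x ∈ Finset.Icc (-(N : ℤ)) N, ‖f x‖ ^ 2 with hS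
  have hS0 : 0 ≤ S := sum_nonneg fun _ _ => by positivity
  rcases hS0.eq_or_lt with h0 | h0
  · rw [← h0] at hF ⊢
    simp only [mul_zero, Real.sqrt_zero] at hF ⊢
    rw [zero_pow (by omega), mul_zero]
    apply le_of_eq
    apply sum_eq_zero
    intro j _
    rw [le_antisymm (hF j) (norm_nonneg _), zero_pow (by omega)]
  · have hg := hg h0
    set D := Real.sqrt (N * S) with hD
    have hD0 : 0 < D := Real.sqrt_pos.2 (by positivity)
    simp only [div_pow] at hg
    rw [← sum_div, div_le_iff₀ (by positivity)] at hg
    calc ∑ j ∈ range (4 * N ^ 2), ‖FF N f j‖ ^ n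
        ≤ ∑ j ∈ range (4 * N ^ 2), (2 * D) ^ (n - 5) * ‖FF N f j‖ ^ 5 := by
          apply sum_le_sum; intro j _
          have e : ‖FF N f j‖ ^ n = ‖FF N f j‖ ^ (n - 5) * ‖FF N f j‖ ^ 5 := by
            rw [← pow_add]; congr 1; omega
          rw [e]
          have := hF j
          gcongr
      _ = (2 * D) ^ (n - 5) * ∑ j ∈ range (4 * N ^ 2), ‖FF N f j‖ ^ 5 := by rw [mul_sum]
      _ ≤ (2 * D) ^ (n - 5) * (C * D ^ 5) := by gcongr
      _ = 2 ^ (n - 5) * C * (D ^ (n - 5) * D ^ 5) := by rw [mul_pow]; ring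
      _ = _ := by rw [← pow_add]; congr 2; omega

lemma split_integral (g : ℝ → ℝ) (hg : Continuous g) (M : ℕ) (hM : 0 < M) :
    ∫ α in (0 : ℝ)..1, g α = ∫ t in (0 : ℝ)..(1 / M), ∑ j ∈ range M, g (t + j / M) := by
  have hMr : (0 : ℝ) < M := by exact_mod_cast hM
  rw [intervalIntegral.integral_finsetSum
    (fun (j : ℕ) _ => (by fun_prop : Continuous fun t : ℝ => g (t + (j : ℝ) / M)).intervalIntegrable _ _)]
  have h1 := intervalIntegral.sum_integral_adjacent_intervals (f := g) (μ := volume)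
    (a := fun k : ℕ => (k : ℝ) / M) (n := M) (fun k _ => hg.intervalIntegrable _ _)
  simp only [Nat.cast_zero, zero_div, div_self hMr.ne'] at h1
  rw [← h1]
  apply sum_congr rfl; intro j _
  rw [intervalIntegral.integral_comp_add_right (fun x => g x)]
  congr 1
  · ring
  · push_cast; ring

/-- discrete restriction estimate for the parabola: for `n ≥ 5` there is a
constant `C = C(n)` so that for all `N ≥ 1` and `f : ℤ → ℂ`,
`∫₀¹ |∑_{|x| ≤ N} f(x) e(α x²)|^n dα ≤ C N^{n-2} (N⁻¹ ∑_{|x| ≤ N} |f(x)|²)^{n/2}`. -/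
theorem statement9 (n : ℕ) (hn : 5 ≤ n) :
    ∃ C : ℝ, 0 < C ∧ ∀ N : ℕ, 1 ≤ N → ∀ f : ℤ → ℂ,
      (∫ α in Set.Ioc (0 : ℝ) 1,
          ‖∑ x ∈ Finset.Icc (-(N : ℤ)) (N : ℤ),
              f x * Complex.exp (2 * Real.pi * Complex.I * (α : ℂ) * (x : ℂ) ^ 2)‖ ^ n)
        ≤ C * (N : ℝ) ^ (n - 2) *
            ((N : ℝ)⁻¹ * ∑ x ∈ Finset.Icc (-(N : ℤ)) (N : ℤ), ‖f x‖ ^ 2) ^ ((n : ℝ) / 2) := by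
  obtain ⟨C, hC, hgrid⟩ := grid_n n hn
  refine ⟨C, by linarith, fun N hN f => ?_⟩
  have hN1 : (1 : ℝ) ≤ N := by exact_mod_cast hN
  have hN0 : (0 : ℝ) < N := by linarith
  set g : ℝ → ℝ := fun α => ‖∑ x ∈ Finset.Icc (-(N : ℤ)) (N : ℤ),
              f x * Complex.exp (2 * Real.pi * Complex.I * (α : ℂ) * (x : ℂ) ^ 2)‖ ^ n with hg
  have hgc : Continuous g := by
    simp only [hg]; fun_prop
  set S := ∑ x ∈ Finset.Icc (-(N : ℤ)) (N : ℤ), ‖f x‖ ^ 2 with hS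
  have hS0 : 0 ≤ S := sum_nonneg fun _ _ => by positivity
  rw [← intervalIntegral.integral_of_le zero_le_one, split_integral g hgc (4 * N ^ 2) (by positivity)]
  have hM0 : (0 : ℝ) < ((4 * N ^ 2 : ℕ) : ℝ) := by positivity
  set D := Real.sqrt (N * S) with hD
  have hpt : ∀ t : ℝ, ∑ j ∈ range (4 * N ^ 2), g (t + j / ((4 * N ^ 2 : ℕ) : ℝ)) ≤ C * D ^ n := by
    intro t
    have h1 := hgrid N (fun x => f x * ee (t * (x : ℝ) ^ 2)) hN
    have e1 : ∀ x : ℤ, ‖f x * ee (t * (x : ℝ) ^ 2)‖ = ‖f x‖ := fun x => by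
      rw [norm_mul, ee_norm, mul_one]
    simp only [e1] at h1
    refine le_trans (le_of_eq ?_) h1
    apply sum_congr rfl; intro j _
    simp only [hg, FF]
    congr 2
    apply sum_congr rfl; intro x _
    rw [mul_assoc (f x), ← ee_add]
    congr 1
    unfold ee
    congr 1
    push_cast
    ring
  have hcont : Continuous fun t : ℝ => ∑ j ∈ range (4 * N ^ 2), g (t + j / ((4 * N ^ 2 : ℕ) : ℝ)) := by
    fun_prop
  have h2 := intervalIntegral.integral_mono_on (a := 0) (b := 1 / ((4 * N ^ 2 : ℕ) : ℝ)) (by positivity)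
    (hcont.intervalIntegrable (μ := volume) _ _)
    (continuous_const.intervalIntegrable (μ := volume) _ _) (fun t _ => hpt t)
  refine h2.trans ?_
  rw [intervalIntegral.integral_const, sub_zero, smul_eq_mul]
  have e3 : D ^ n = (N : ℝ) ^ n * ((N : ℝ)⁻¹ * S) ^ ((n : ℝ) / 2) := by
    rw [hD, Real.sqrt_eq_rpow, ← Real.rpow_natCast, ← Real.rpow_mul (by positivity),
      show (N : ℝ) * S = (N : ℝ) ^ (2 : ℕ) * ((N : ℝ)⁻¹ * S) by field_simp,
      Real.mul_rpow (by positivity) (by positivity), ← Real.rpow_natCast (N : ℝ) 2,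
      ← Real.rpow_mul hN0.le, ← Real.rpow_natCast (N : ℝ) n]
    congr 2
    · push_cast; ring
    · ring
  have e4 : (N : ℝ) ^ n = (N : ℝ) ^ (n - 2) * (N : ℝ) ^ 2 := by
    rw [← pow_add]; congr 1; omega
  rw [e3, e4]
  have hX : 0 ≤ ((N : ℝ)⁻¹ * S) ^ ((n : ℝ) / 2) := by positivity
  have hY : 0 ≤ C * (N : ℝ) ^ (n - 2) * ((N : ℝ)⁻¹ * S) ^ ((n : ℝ) / 2) := by positivity
  have e5 : 1 / ((4 * N ^ 2 : ℕ) : ℝ) * (C * ((N : ℝ) ^ (n - 2) * (N : ℝ) ^ 2 * ((N : ℝ)⁻¹ * S) ^ ((n : ℝ) / 2))) =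
      1 / 4 * (C * (N : ℝ) ^ (n - 2) * ((N : ℝ)⁻¹ * S) ^ ((n : ℝ) / 2)) := by
    push_cast; field_simp
  rw [e5]
  linarith
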